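/- arXiv:2107.11804 — 2 statements merged into one kernel-verified Lean document; each statement's English description precedes it below -/
import Mathlib

section
/- Let α ∈ (0,1) and let K be a general inter-arrival law with exponent α, with partition function Z_{N,h}. Then: (1) there exist C > 0 and N₀ ∈ ℕ such that Z_{N,h} ≠ 0 for every N ≥ N₀ and every h ∈ ℂ with Re h ≥ C; (2) for every ε > 0 there exists N_ε ∈ ℕ such that Z_{N,h} ≠ 0 for every N ≥ N_ε and every h ∈ ℂ with Re h ≤ −ε; (3) for every ε' > 0 there exist C_{ε'} > 0 and N' ∈ ℕ such that Z_{N,h} ≠ 0 for every N ≥ N' and every h ∈ ℂ with Re h > ε' and |Im h| < C_{ε'}. -/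
/-!
Write `w = e^h` and `Z_n` for the partition function, extended by `Z_0 = 1`. It satisfies the renewal
equation `Z_n = w ∑ K(j) Z_{n-j}`, so `Z_n` is a polynomial in `w` whose coefficients are the
convolution powers of `K`.

* For `|w|` large the term `w K(1) Z_{n-1}` dominates the renewal equation, so `|Z_n|` increases
  (`polyZ_ne_zero_of_large`).
* For `|w| ≤ r < 1`, the `k`-th convolution power is asymptotic to `k c n^{-s}`, `s = 1 + α`, and is
  at most a polynomial in `k` times `n^{-s}` (`convPow_le`). Dominated convergence over `k` shows
  that `n^s Z_n / w → c / (1 - w)^2` uniformly in `w`, and this limit is bounded away from zero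
  (`polyZ_ne_zero_of_small`).
* Let `f` be the generating function of `K` and `w = 1 / f(z)`. The generating function of `Z` at
  `v` is `f(z) / (f(z) - f(v))`. For `z = x ∈ (0, 1)` the only solution of `f(v) = f(x)` in
  `|v| ≤ x` is the simple one `v = x`, so for `z` near `x` the function
  `(z - v) ∑ Z_n v^n = f(z) (z - v) / (f(z) - f(v))` is analytic on a fixed disc larger than `|z|`.
  Cauchy's estimates make `z Z_n - Z_{n-1}` small, and summing up, `z^{n+1} Z_n` converges
  uniformly near `x` to a nonzero limit (`polyZ_asymptotic`, `polyZ_ne_zero_near`). As `f` is a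
  local homeomorphism at `x`, this covers a neighbourhood of every real `h > 0`; compactness of
  `[ε', C]` and the estimate for large `|w|` give the strip.
-/


open Filter

/-- The pinning partition function
`Z_{N,h} = ∑_{k=1}^N e^{kh} ∑_{ℓ ∈ ℕ_{≥1}^k, ℓ_1+⋯+ℓ_k=N} ∏_j K(ℓ_j)`. -/
noncomputable def pinZ (K : ℕ → ℝ) (N : ℕ) (h : ℂ) : ℂ :=
  ∑ k ∈ Finset.Icc 1 N, Complex.exp ((k : ℂ) * h) *
    ∑ ℓ ∈ (Finset.Nat.antidiagonalTuple k N).filter (fun ℓ => ∀ i, 1 ≤ ℓ i),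
      ∏ i, (K (ℓ i) : ℂ)

/-- A general inter-arrival law with exponent `α`: nonnegative, `K 1 > 0`,
total mass one, and `n^{1+α} K(n) → c` for some `c > 0`. -/
def IsInterArrivalLaw (α : ℝ) (K : ℕ → ℝ) : Prop :=
  (∀ n, 1 ≤ n → 0 ≤ K n) ∧ 0 < K 1 ∧ HasSum (fun n : ℕ => K (n + 1)) 1 ∧
    ∃ c : ℝ, 0 < c ∧ Tendsto (fun n : ℕ => (n : ℝ) ^ (1 + α) * K n) atTop (nhds c)

/-! ### The partition function as a renewal sequence -/

/-- The law `K` with its irrelevant value at `0` replaced by `0`. -/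
noncomputable def lawZ (K : ℕ → ℝ) (n : ℕ) : ℝ := if n = 0 then 0 else K n

/-- The `k`-fold convolution power of `κ` on `ℕ`; the `0`-th power is the unit mass at `0`. -/
noncomputable def convPow (κ : ℕ → ℝ) : ℕ → ℕ → ℝ
  | 0, N => if N = 0 then 1 else 0
  | k + 1, N => ∑ p ∈ Finset.HasAntidiagonal.antidiagonal N, κ p.1 * convPow κ k p.2

/-- The polynomial `∑_{k ≤ N} w ^ k κ^{*k}(N)`. It is `1` at `N = 0`, and agrees with the
partition function, in the variable `w = e^h`, for `N ≥ 1`. -/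
noncomputable def polyZ (κ : ℕ → ℝ) (w : ℂ) (N : ℕ) : ℂ :=
  ∑ k ∈ Finset.range (N + 1), w ^ k * (convPow κ k N : ℂ)

theorem sum_prod_tuple_eq_convPow (κ : ℕ → ℝ) (k : ℕ) : ∀ N,
    ∑ ℓ ∈ Finset.Nat.antidiagonalTuple k N, ∏ i, κ (ℓ i) = convPow κ k N := by
  induction k with
  | zero =>
    intro N
    cases N with
    | zero => simp [convPow]
    | succ n => simp [convPow]
  | succ k ih =>
    intro N
    simp only [convPow, ← ih, Finset.mul_sum]
    rw [Finset.sum_sigma']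
    refine Finset.sum_bij' (fun ℓ _ => ⟨(ℓ 0, ∑ i, ℓ (Fin.succ i)), Fin.tail ℓ⟩)
      (fun p _ => Fin.cons p.1.1 p.2) ?_ ?_ ?_ ?_ ?_
    · intro ℓ h
      rw [Finset.Nat.mem_antidiagonalTuple, Fin.sum_univ_succ] at h
      simp [Finset.Nat.mem_antidiagonalTuple, Fin.tail, h]
    · rintro ⟨⟨a, b⟩, ℓ⟩ h
      simp only [Finset.mem_sigma, Finset.HasAntidiagonal.mem_antidiagonal,
        Finset.Nat.mem_antidiagonalTuple] at h
      simp [Finset.Nat.mem_antidiagonalTuple, Fin.sum_univ_succ, h.1, h.2]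
    · intro ℓ h
      exact Fin.cons_self_tail ℓ
    · rintro ⟨⟨a, b⟩, ℓ⟩ h
      simp only [Finset.mem_sigma, Finset.HasAntidiagonal.mem_antidiagonal,
        Finset.Nat.mem_antidiagonalTuple] at h
      simp [h.2]
    · intro ℓ h
      simp [Fin.prod_univ_succ, Fin.tail]

theorem pinZ_eq_polyZ (K : ℕ → ℝ) {N : ℕ} (hN : 1 ≤ N) (h : ℂ) :
    pinZ K N h = polyZ (lawZ K) (Complex.exp h) N := by
  have hf : ∀ k, ∑ ℓ ∈ (Finset.Nat.antidiagonalTuple k N).filter (fun ℓ => ∀ i, 1 ≤ ℓ i),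
      ∏ i, (K (ℓ i) : ℂ) = (convPow (lawZ K) k N : ℂ) := by
    intro k
    rw [← sum_prod_tuple_eq_convPow, Finset.sum_filter]
    push_cast
    refine Finset.sum_congr rfl fun ℓ _ => ?_
    split_ifs with hl
    · refine Finset.prod_congr rfl fun i _ => ?_
      have := hl i
      rw [lawZ, if_neg (by omega)]
    · push Not at hl
      obtain ⟨i, hi⟩ := hl
      symm
      refine Finset.prod_eq_zero (Finset.mem_univ i) ?_
      rw [lawZ, if_pos (by omega)]
      simp
  unfold pinZ polyZ
  have hr : Finset.range (N + 1) = insert 0 (Finset.Icc 1 N) := by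
    ext x; simp; omega
  rw [hr, Finset.sum_insert (by simp)]
  have : N ≠ 0 := by omega
  simp [convPow, this, hf, Complex.exp_nat_mul]

section Renewal

variable {κ : ℕ → ℝ}

theorem convPow_eq_zero (h0 : κ 0 = 0) : ∀ k N, N < k → convPow κ k N = 0 := by
  intro k
  induction k with
  | zero => intro N h; omega
  | succ k ih =>
    intro N h
    refine Finset.sum_eq_zero fun p hp => ?_
    rw [Finset.HasAntidiagonal.mem_antidiagonal] at hp
    rcases Nat.eq_zero_or_pos p.1 with h1 | h1
    · rw [h1, h0, zero_mul]
    · rw [ih _ (by omega), mul_zero]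

theorem convPow_nonneg (hnn : ∀ n, 0 ≤ κ n) : ∀ k N, 0 ≤ convPow κ k N := by
  intro k
  induction k with
  | zero => intro N; simp only [convPow]; split_ifs <;> norm_num
  | succ k ih => intro N; exact Finset.sum_nonneg fun p _ => mul_nonneg (hnn _) (ih _)

theorem polyZ_eq_sum_of_le (h0 : κ 0 = 0) (w : ℂ) {N M : ℕ} (h : N ≤ M) :
    polyZ κ w N = ∑ k ∈ Finset.range (M + 1), w ^ k * (convPow κ k N : ℂ) := by
  refine Finset.sum_subset (Finset.range_mono (by omega)) fun k _ hk => ?_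
  rw [convPow_eq_zero h0 k N (by simpa using hk)]
  simp

theorem polyZ_zero (w : ℂ) : polyZ κ w 0 = 1 := by simp [polyZ, convPow]

/-- The renewal equation for the partition function. -/
theorem polyZ_renewal (h0 : κ 0 = 0) (w : ℂ) (N : ℕ) :
    polyZ κ w N = (if N = 0 then 1 else 0)
      + w * ∑ p ∈ Finset.HasAntidiagonal.antidiagonal N, (κ p.1 : ℂ) * polyZ κ w p.2 := by
  have h1 : ∑ p ∈ Finset.HasAntidiagonal.antidiagonal N, (κ p.1 : ℂ) * polyZ κ w p.2 =
      ∑ k ∈ Finset.range (N + 1), w ^ k * (convPow κ (k + 1) N : ℂ) := by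
    simp only [convPow]
    push_cast
    simp only [Finset.mul_sum]
    rw [Finset.sum_comm]
    refine Finset.sum_congr rfl fun p hp => ?_
    rw [Finset.HasAntidiagonal.mem_antidiagonal] at hp
    rw [polyZ_eq_sum_of_le h0 w (show p.2 ≤ N by omega), Finset.mul_sum]
    exact Finset.sum_congr rfl fun k _ => by ring
  rw [h1, polyZ_eq_sum_of_le h0 w (Nat.le_succ N), Finset.sum_range_succ', add_comm,
    Finset.mul_sum]
  simp only [convPow, pow_zero, one_mul]
  congr 1
  · split_ifs <;> simp
  · exact Finset.sum_congr rfl fun k _ => by ring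

theorem polyZ_succ (h0 : κ 0 = 0) (w : ℂ) (N : ℕ) :
    polyZ κ w (N + 1) = w * ∑ i ∈ Finset.range (N + 1), (κ (i + 1) : ℂ) * polyZ κ w (N - i) := by
  rw [polyZ_renewal h0, Finset.Nat.antidiagonal_succ]
  simp [h0, Finset.Nat.sum_antidiagonal_eq_sum_range_succ_mk]

end Renewal

/-! ### Large `Re h` -/

/-- For `|w|` large the term `w κ(1) Z_N` dominates the renewal equation for `Z_{N+1}`, so that
`|Z_{N+1}| ≥ (|w| κ(1) / 2) |Z_N|`. -/
theorem polyZ_growth {κ : ℕ → ℝ} (h0 : κ 0 = 0) (hnn : ∀ n, 0 ≤ κ n) (h1 : 0 < κ 1)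
    (hs : HasSum κ 1) {w : ℂ} (hw : 4 / κ 1 ^ 2 ≤ ‖w‖) (N : ℕ) :
    ‖w‖ * κ 1 / 2 * ‖polyZ κ w N‖ ≤ ‖polyZ κ w (N + 1)‖ := by
  have hκ1 : κ 1 ≤ 1 := le_hasSum hs 1 fun n _ => hnn n
  have hw' : 2 / κ 1 ≤ ‖w‖ * κ 1 / 2 := by
    rw [div_le_iff₀ (by positivity)] at hw ⊢
    nlinarith
  set ρ := ‖w‖ * κ 1 / 2 with hρ
  have hρ2 : 2 ≤ ρ * κ 1 := by rwa [div_le_iff₀ h1] at hw'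
  have hρ1 : 1 ≤ ρ := by nlinarith
  have hρ0 : 0 < ρ := by linarith
  induction N using Nat.strong_induction_on with
  | _ N ih =>
    have hback : ∀ i ≤ N, ρ ^ i * ‖polyZ κ w (N - i)‖ ≤ ‖polyZ κ w N‖ := by
      intro i
      induction i with
      | zero => simp
      | succ i ih2 =>
        intro hi
        have e1 := ih (N - (i + 1)) (by omega)
        rw [show N - (i + 1) + 1 = N - i by omega] at e1
        calc ρ ^ (i + 1) * ‖polyZ κ w (N - (i + 1))‖
            = ρ ^ i * (ρ * ‖polyZ κ w (N - (i + 1))‖) := by ring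
          _ ≤ ρ ^ i * ‖polyZ κ w (N - i)‖ := by gcongr
          _ ≤ _ := ih2 (by omega)
    have hsum : ∑ i ∈ Finset.range N, κ (i + 2) ≤ 1 := by
      have := sum_le_hasSum ((Finset.range N).map (addRightEmbedding 2)) (fun n _ => hnn n) hs
      simpa using this
    have htail : ‖∑ i ∈ Finset.range N, (κ (i + 1 + 1) : ℂ) * polyZ κ w (N - (i + 1))‖
        ≤ κ 1 / 2 * ‖polyZ κ w N‖ := by
      calc _ ≤ ∑ i ∈ Finset.range N, κ (i + 2) * (κ 1 / 2 * ‖polyZ κ w N‖) := by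
            refine norm_sum_le_of_le _ fun i hi => ?_
            rw [Finset.mem_range] at hi
            rw [norm_mul, Complex.norm_real, Real.norm_of_nonneg (hnn _)]
            refine mul_le_mul_of_nonneg_left ?_ (hnn _)
            have e1 := hback (i + 1) (by omega)
            have e2 : ρ ≤ ρ ^ (i + 1) := le_self_pow₀ hρ1 (by omega)
            have e3 : ρ * ‖polyZ κ w (N - (i + 1))‖ ≤ ‖polyZ κ w N‖ :=
              le_trans (by gcongr) e1
            have e4 := norm_nonneg (polyZ κ w (N - (i + 1)))
            nlinarith
        _ = (∑ i ∈ Finset.range N, κ (i + 2)) * (κ 1 / 2 * ‖polyZ κ w N‖) := by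
            rw [Finset.sum_mul]
        _ ≤ 1 * (κ 1 / 2 * ‖polyZ κ w N‖) := by gcongr
        _ = _ := one_mul _
    rw [polyZ_succ h0, Finset.sum_range_succ', norm_mul]
    have hlow : κ 1 * ‖polyZ κ w N‖ - κ 1 / 2 * ‖polyZ κ w N‖ ≤
        ‖∑ i ∈ Finset.range N, (κ (i + 1 + 1) : ℂ) * polyZ κ w (N - (i + 1))
          + (κ (0 + 1) : ℂ) * polyZ κ w (N - 0)‖ := by
      have e1 := norm_sub_le_norm_add ((κ (0 + 1) : ℂ) * polyZ κ w (N - 0))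
        (∑ i ∈ Finset.range N, (κ (i + 1 + 1) : ℂ) * polyZ κ w (N - (i + 1)))
      rw [add_comm ((κ (0 + 1) : ℂ) * polyZ κ w (N - 0)), norm_mul, Complex.norm_real,
        Real.norm_of_nonneg (hnn _), zero_add, Nat.sub_zero] at e1
      simp only [zero_add, Nat.sub_zero]
      linarith
    calc ρ * ‖polyZ κ w N‖
        = ‖w‖ * (κ 1 * ‖polyZ κ w N‖ - κ 1 / 2 * ‖polyZ κ w N‖) := by rw [hρ]; ring
      _ ≤ _ := by gcongr

theorem polyZ_ne_zero_of_large {κ : ℕ → ℝ} (h0 : κ 0 = 0) (hnn : ∀ n, 0 ≤ κ n) (h1 : 0 < κ 1)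
    (hs : HasSum κ 1) {w : ℂ} (hw : 4 / κ 1 ^ 2 ≤ ‖w‖) (N : ℕ) : polyZ κ w N ≠ 0 := by
  induction N with
  | zero => simp [polyZ_zero]
  | succ N ih =>
    have e1 := polyZ_growth h0 hnn h1 hs hw N
    have e2 : 0 < ‖w‖ := lt_of_lt_of_le (by positivity) hw
    have e3 : 0 < ‖polyZ κ w N‖ := norm_pos_iff.mpr ih
    exact norm_pos_iff.mp (lt_of_lt_of_le (by positivity) e1)

/-! ### Negative `Re h` -/

/-- The half of a convolution in which the first variable carries less than half of the mass.
Dominated convergence applies because the second variable is then comparable to `n`. -/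
theorem tendsto_half_conv {s : ℝ} (hs : 0 < s) {a b : ℕ → ℝ} (ha : ∀ n, 0 ≤ a n) {A y : ℝ}
    (hA : HasSum a A) (hy : Tendsto (fun n : ℕ => (n : ℝ) ^ s * b n) atTop (nhds y))
    (P : ℕ → ℕ → Prop) [∀ n i, Decidable (P n i)] (hP : ∀ n i, P n i → 2 * i ≤ n)
    (hP' : ∀ i, ∀ᶠ n in atTop, P n i) :
    Tendsto (fun n : ℕ => (n : ℝ) ^ s *
      ∑ i ∈ Finset.range (n + 1), if P n i then a i * b (n - i) else 0) atTop (nhds (A * y)) := by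
  obtain ⟨M, hM⟩ : ∃ M, ∀ n : ℕ, |(n : ℝ) ^ s * b n| ≤ M := by
    obtain ⟨M, hM⟩ := hy.abs.bddAbove_range
    exact ⟨M, fun n => hM ⟨n, rfl⟩⟩
  have key : Tendsto (fun n : ℕ => ∑' i, (if P n i then a i * ((n : ℝ) ^ s * b (n - i)) else 0))
      atTop (nhds (∑' i, a i * y)) := by
    refine tendsto_tsum_of_dominated_convergence (bound := fun i => a i * (2 ^ s * M))
      (hA.summable.mul_right _) ?_ ?_
    · intro i
      have e1 : Tendsto (fun n : ℕ => (n : ℝ) ^ s * b (n - i)) atTop (nhds y) := by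
        rw [← tendsto_add_atTop_iff_nat i]
        simp only [Nat.add_sub_cancel]
        have e2 : Tendsto (fun n : ℕ => (((n + i : ℕ) : ℝ) / n) ^ s) atTop (nhds 1) := by
          have e3 : Tendsto (fun n : ℕ => 1 + (i : ℝ) / n) atTop (nhds (1 + 0)) :=
            tendsto_const_nhds.add (tendsto_const_div_atTop_nhds_zero_nat _)
          have e4 := (e3.rpow_const (p := s) (Or.inl (by norm_num)))
          rw [add_zero, Real.one_rpow] at e4
          refine e4.congr' ?_
          filter_upwards [eventually_gt_atTop 0] with n hn
          congr 1
          push_cast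
          field_simp
        have e5 := e2.mul hy
        rw [one_mul] at e5
        refine e5.congr' ?_
        filter_upwards [eventually_gt_atTop 0] with n hn
        have : (0 : ℝ) < (n : ℝ) ^ s := by positivity
        rw [Real.div_rpow (by positivity) (by positivity)]
        field_simp
      refine (e1.const_mul (a i)).congr' ?_
      filter_upwards [hP' i] with n hn
      rw [if_pos hn]
    · filter_upwards with n i
      have hM0 : 0 ≤ M := (abs_nonneg _).trans (hM 0)
      split_ifs with h
      · rw [norm_mul, Real.norm_of_nonneg (ha i)]
        refine mul_le_mul_of_nonneg_left ?_ (ha i)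
        have h2 := hP n i h
        have h3 : (n : ℝ) ≤ 2 * ((n - i : ℕ) : ℝ) := by
          exact_mod_cast (by omega : n ≤ 2 * (n - i))
        rw [norm_mul, Real.norm_of_nonneg (by positivity)]
        calc (n : ℝ) ^ s * ‖b (n - i)‖ ≤ (2 * ((n - i : ℕ) : ℝ)) ^ s * ‖b (n - i)‖ := by gcongr
          _ = 2 ^ s * |((n - i : ℕ) : ℝ) ^ s * b (n - i)| := by
              rw [Real.mul_rpow (by norm_num) (by positivity), abs_mul,
                abs_of_nonneg (by positivity : (0 : ℝ) ≤ ((n - i : ℕ) : ℝ) ^ s),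
                Real.norm_eq_abs, mul_assoc]
          _ ≤ _ := by gcongr; exact hM _
      · rw [norm_zero]
        have := ha i
        positivity
  rw [tsum_mul_right, hA.tsum_eq] at key
  refine key.congr fun n => ?_
  rw [tsum_eq_sum (s := Finset.range (n + 1)), Finset.mul_sum]
  · refine Finset.sum_congr rfl fun i _ => ?_
    split_ifs <;> ring
  · intro i hi
    rw [Finset.mem_range] at hi
    rw [if_neg fun h => by have := hP n i h; omega]

theorem tendsto_conv {s : ℝ} (hs : 0 < s) {a b : ℕ → ℝ} (ha : ∀ n, 0 ≤ a n) (hb : ∀ n, 0 ≤ b n)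
    {A B x y : ℝ} (hA : HasSum a A) (hB : HasSum b B)
    (hx : Tendsto (fun n : ℕ => (n : ℝ) ^ s * a n) atTop (nhds x))
    (hy : Tendsto (fun n : ℕ => (n : ℝ) ^ s * b n) atTop (nhds y)) :
    Tendsto (fun n : ℕ => (n : ℝ) ^ s * ∑ p ∈ Finset.HasAntidiagonal.antidiagonal n, a p.1 * b p.2)
      atTop (nhds (A * y + B * x)) := by
  have e1 := tendsto_half_conv hs ha hA hy (fun n i => 2 * i ≤ n) (fun _ _ h => h)
    (fun i => eventually_ge_atTop _)
  have e2 := tendsto_half_conv hs hb hB hx (fun n i => 2 * i < n) (fun _ _ h => le_of_lt h)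
    (fun i => eventually_gt_atTop _)
  refine (e1.add e2).congr fun n => ?_
  rw [← mul_add]
  congr 1
  rw [Finset.Nat.sum_antidiagonal_eq_sum_range_succ (fun i j => a i * b j),
    ← Finset.sum_range_reflect (fun i => if 2 * i < n then b i * a (n - i) else 0),
    ← Finset.sum_add_distrib]
  refine Finset.sum_congr rfl fun i hi => ?_
  rw [Finset.mem_range] at hi
  have e3 : n + 1 - 1 - i = n - i := by omega
  have e4 : n - (n - i) = i := by omega
  rw [e3, e4]
  by_cases h : 2 * i ≤ n
  · rw [if_pos h, if_neg (by omega), add_zero]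
  · rw [if_neg h, if_pos (by omega), zero_add, mul_comm]

section Subexponential

variable {κ : ℕ → ℝ} {s c : ℝ}

theorem hasSum_convPow (hκ : HasSum κ 1) (k : ℕ) :
    HasSum (convPow κ k) 1 := by
  induction k with
  | zero =>
    have := hasSum_ite_eq (0 : ℕ) (1 : ℝ)
    exact this
  | succ k ih =>
    have n1 : Summable fun n => ‖κ n‖ := hκ.summable.norm
    have n2 : Summable fun n => ‖convPow κ k n‖ := ih.summable.norm
    have e1 := (summable_norm_sum_mul_antidiagonal_of_summable_norm n1 n2).of_norm.hasSum
    rw [← tsum_mul_tsum_eq_tsum_sum_antidiagonal_of_summable_norm n1 n2, hκ.tsum_eq,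
      ih.tsum_eq, one_mul] at e1
    exact e1

theorem tendsto_convPow (hs : 0 < s) (hnn : ∀ n, 0 ≤ κ n) (hκ : HasSum κ 1)
    (hc : Tendsto (fun n : ℕ => (n : ℝ) ^ s * κ n) atTop (nhds c)) (k : ℕ) :
    Tendsto (fun n : ℕ => (n : ℝ) ^ s * convPow κ k n) atTop (nhds (k * c)) := by
  induction k with
  | zero =>
    refine (tendsto_const_nhds (x := (0 : ℝ))).congr' ?_ |>.trans (by simp)
    filter_upwards [eventually_gt_atTop 0] with n hn
    simp [convPow, hn.ne']
  | succ k ih =>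
    have := tendsto_conv hs hnn (convPow_nonneg hnn k) hκ (hasSum_convPow hκ k) hc ih
    rwa [show 1 * ((k : ℝ) * c) + 1 * c = ((k + 1 : ℕ) : ℝ) * c by push_cast; ring] at this

/-- A bound polynomial in `k` for `n ^ s κ^{*k}(n)`: at least one of the `k` jumps is at least
`n / k`. -/
theorem convPow_le (hs : 0 < s) (hnn : ∀ n, 0 ≤ κ n) (hκ : HasSum κ 1) {M : ℝ}
    (hM : ∀ n : ℕ, (n : ℝ) ^ s * κ n ≤ M) (k : ℕ) :
    ∀ n : ℕ, (n : ℝ) ^ s * convPow κ k n ≤ (k : ℝ) ^ s * M * k := by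
  have hM0 : 0 ≤ M := le_trans (by have := hnn 0; positivity) (hM 0)
  induction k with
  | zero =>
    intro n
    rcases Nat.eq_zero_or_pos n with h | h
    · simp [h, Real.zero_rpow hs.ne']
    · simp [convPow, h.ne']
  | succ k ih =>
    intro n
    have cnn := convPow_nonneg hnn k
    have hterm : ∀ p ∈ Finset.HasAntidiagonal.antidiagonal n,
        (n : ℝ) ^ s * (κ p.1 * convPow κ k p.2) ≤
          ((k + 1 : ℕ) : ℝ) ^ s * M * convPow κ k p.2 +
          ((k + 1 : ℕ) : ℝ) ^ s * M * k * κ p.1 := by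
      intro p hp
      rw [Finset.HasAntidiagonal.mem_antidiagonal] at hp
      have h1 := hnn p.1
      have h2 := cnn p.2
      by_cases h : n ≤ (k + 1) * p.1
      · have e1 : (n : ℝ) ^ s ≤ ((k + 1 : ℕ) : ℝ) ^ s * (p.1 : ℝ) ^ s := by
          rw [← Real.mul_rpow (by positivity) (by positivity)]
          refine Real.rpow_le_rpow (by positivity) ?_ hs.le
          exact_mod_cast h
        calc (n : ℝ) ^ s * (κ p.1 * convPow κ k p.2)
            ≤ (((k + 1 : ℕ) : ℝ) ^ s * (p.1 : ℝ) ^ s) * (κ p.1 * convPow κ k p.2) := by gcongr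
          _ = ((k + 1 : ℕ) : ℝ) ^ s * ((p.1 : ℝ) ^ s * κ p.1) * convPow κ k p.2 := by ring
          _ ≤ ((k + 1 : ℕ) : ℝ) ^ s * M * convPow κ k p.2 := by gcongr; exact hM _
          _ ≤ _ := le_add_of_nonneg_right (by positivity)
      · have h3 : k * n ≤ (k + 1) * p.2 := by
          have : (k + 1) * p.1 + (k + 1) * p.2 = (k + 1) * n := by rw [← hp]; ring
          nlinarith
        have e2 : (n : ℝ) ^ s * convPow κ k p.2 ≤ ((k + 1 : ℕ) : ℝ) ^ s * M * k := by
          rcases Nat.eq_zero_or_pos k with hk | hk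
          · subst hk
            have : p.2 ≠ 0 := by omega
            simp [convPow, this]
          · have hk' : (0 : ℝ) < (k : ℝ) ^ s := by positivity
            have e1 : (k : ℝ) ^ s * (n : ℝ) ^ s ≤ ((k + 1 : ℕ) : ℝ) ^ s * (p.2 : ℝ) ^ s := by
              rw [← Real.mul_rpow (by positivity) (by positivity),
                ← Real.mul_rpow (by positivity) (by positivity)]
              refine Real.rpow_le_rpow (by positivity) ?_ hs.le
              exact_mod_cast h3
            refine le_of_mul_le_mul_left ?_ hk'
            calc (k : ℝ) ^ s * ((n : ℝ) ^ s * convPow κ k p.2)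
                = ((k : ℝ) ^ s * (n : ℝ) ^ s) * convPow κ k p.2 := by ring
              _ ≤ (((k + 1 : ℕ) : ℝ) ^ s * (p.2 : ℝ) ^ s) * convPow κ k p.2 := by gcongr
              _ = ((k + 1 : ℕ) : ℝ) ^ s * ((p.2 : ℝ) ^ s * convPow κ k p.2) := by ring
              _ ≤ ((k + 1 : ℕ) : ℝ) ^ s * ((k : ℝ) ^ s * M * k) :=
                  mul_le_mul_of_nonneg_left (ih _) (by positivity)
              _ = _ := by ring
        calc (n : ℝ) ^ s * (κ p.1 * convPow κ k p.2)
            = ((n : ℝ) ^ s * convPow κ k p.2) * κ p.1 := by ring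
          _ ≤ (((k + 1 : ℕ) : ℝ) ^ s * M * k) * κ p.1 := by gcongr
          _ ≤ _ := le_add_of_nonneg_left (by positivity)
    have s1 : ∑ p ∈ Finset.HasAntidiagonal.antidiagonal n, κ p.1 ≤ 1 := by
      rw [Finset.Nat.sum_antidiagonal_eq_sum_range_succ (fun i _ => κ i)]
      exact sum_le_hasSum _ (fun i _ => hnn i) hκ
    have s2 : ∑ p ∈ Finset.HasAntidiagonal.antidiagonal n, convPow κ k p.2 ≤ 1 := by
      rw [← Finset.Nat.sum_antidiagonal_swap]
      simp only [Prod.snd_swap]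
      rw [Finset.Nat.sum_antidiagonal_eq_sum_range_succ (fun i _ => convPow κ k i)]
      exact sum_le_hasSum _ (fun i _ => cnn i) (hasSum_convPow hκ k)
    calc (n : ℝ) ^ s * convPow κ (k + 1) n
        = ∑ p ∈ Finset.HasAntidiagonal.antidiagonal n,
            (n : ℝ) ^ s * (κ p.1 * convPow κ k p.2) := by rw [convPow, Finset.mul_sum]
      _ ≤ _ := Finset.sum_le_sum hterm
      _ = ((k + 1 : ℕ) : ℝ) ^ s * M * ∑ p ∈ Finset.HasAntidiagonal.antidiagonal n, convPow κ k p.2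
          + ((k + 1 : ℕ) : ℝ) ^ s * M * k *
            ∑ p ∈ Finset.HasAntidiagonal.antidiagonal n, κ p.1 := by
          rw [Finset.sum_add_distrib, Finset.mul_sum, Finset.mul_sum]
      _ ≤ ((k + 1 : ℕ) : ℝ) ^ s * M * 1 + ((k + 1 : ℕ) : ℝ) ^ s * M * k * 1 := by gcongr
      _ = _ := by push_cast; ring

/-- Uniformly in `|w| ≤ r < 1`, `n ^ s Z_n / w` converges to `c / (1 - w) ^ 2`, whose modulus is
at least `c / 4`. -/
theorem polyZ_ne_zero_of_small (hs : 0 < s) (hs2 : s ≤ 2) (h0 : κ 0 = 0) (hnn : ∀ n, 0 ≤ κ n)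
    (hκ : HasSum κ 1) (hc0 : 0 < c)
    (hc : Tendsto (fun n : ℕ => (n : ℝ) ^ s * κ n) atTop (nhds c))
    {r : ℝ} (hr0 : 0 ≤ r) (hr : r < 1) :
    ∃ N₀ : ℕ, ∀ N ≥ N₀, ∀ w : ℂ, w ≠ 0 → ‖w‖ ≤ r → polyZ κ w N ≠ 0 := by
  obtain ⟨M, hM⟩ : ∃ M, ∀ n : ℕ, (n : ℝ) ^ s * κ n ≤ M := by
    obtain ⟨M, hM⟩ := hc.bddAbove_range
    exact ⟨M, fun n => hM ⟨n, rfl⟩⟩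
  have hM0 : 0 ≤ M := le_trans (by have := hnn 0; positivity) (hM 0)
  have hpow : ∀ (m : ℕ), Summable fun k : ℕ => ((k + 1 : ℕ) : ℝ) ^ m * r ^ k := by
    intro m
    rcases hr0.eq_or_lt with h | h
    · refine summable_of_ne_finset_zero (s := {0}) fun k hk => ?_
      rw [Finset.mem_singleton] at hk
      rw [← h, zero_pow hk, mul_zero]
    · have e0 : Summable fun k : ℕ => (k : ℝ) ^ m * r ^ k :=
        summable_pow_mul_geometric_of_norm_lt_one m (by rwa [Real.norm_of_nonneg hr0])
      have e1 : Summable fun k : ℕ => ((k + 1 : ℕ) : ℝ) ^ m * r ^ (k + 1) :=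
        (summable_nat_add_iff (f := fun k : ℕ => (k : ℝ) ^ m * r ^ k) 1).mpr e0
      refine (e1.mul_right r⁻¹).congr fun k => ?_
      rw [pow_succ]
      field_simp
  have hconv_bound : ∀ n k : ℕ, (n : ℝ) ^ s * convPow κ (k + 1) n ≤ ((k + 1 : ℕ) : ℝ) ^ 3 * M := by
    intro n k
    refine (convPow_le hs hnn hκ hM (k + 1) n).trans ?_
    have : ((k + 1 : ℕ) : ℝ) ^ s ≤ ((k + 1 : ℕ) : ℝ) ^ 2 := by
      rw [← Real.rpow_natCast ((k + 1 : ℕ) : ℝ) 2]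
      refine Real.rpow_le_rpow_of_exponent_le ?_ (by exact_mod_cast hs2)
      exact_mod_cast Nat.le_add_left 1 k
    calc _ ≤ ((k + 1 : ℕ) : ℝ) ^ 2 * M * ((k + 1 : ℕ) : ℝ) := by gcongr
      _ = _ := by ring
  have hb1 : ∀ n k : ℕ, r ^ k * |(n : ℝ) ^ s * convPow κ (k + 1) n - ((k + 1 : ℕ) : ℝ) * c|
      ≤ ((k + 1 : ℕ) : ℝ) ^ 3 * r ^ k * M + ((k + 1 : ℕ) : ℝ) ^ 1 * r ^ k * c := by
    intro n k
    have e1 := hconv_bound n k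
    have e2 : 0 ≤ (n : ℝ) ^ s * convPow κ (k + 1) n :=
      mul_nonneg (by positivity) (convPow_nonneg hnn _ _)
    calc _ ≤ r ^ k * (((k + 1 : ℕ) : ℝ) ^ 3 * M + ((k + 1 : ℕ) : ℝ) * c) := by
          gcongr
          refine (abs_sub _ _).trans ?_
          rw [abs_of_nonneg e2, abs_of_nonneg (by positivity)]
          gcongr
      _ = _ := by ring
  have hbs : Summable fun k : ℕ =>
      ((k + 1 : ℕ) : ℝ) ^ 3 * r ^ k * M + ((k + 1 : ℕ) : ℝ) ^ 1 * r ^ k * c :=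
    ((hpow 3).mul_right M).add ((hpow 1).mul_right c)
  have hlim : Tendsto (fun n : ℕ => ∑' k : ℕ,
      r ^ k * |(n : ℝ) ^ s * convPow κ (k + 1) n - ((k + 1 : ℕ) : ℝ) * c|) atTop
      (nhds (∑' _ : ℕ, (0 : ℝ))) := by
    refine tendsto_tsum_of_dominated_convergence hbs ?_ ?_
    · intro k
      have e1 := ((tendsto_convPow hs hnn hκ hc (k + 1)).sub_const (((k + 1 : ℕ) : ℝ) * c)).abs
      have e2 := e1.const_mul (r ^ k)
      simpa using e2
    · filter_upwards with n k
      rw [Real.norm_of_nonneg (by positivity)]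
      exact hb1 n k
  rw [tsum_zero] at hlim
  obtain ⟨N₀, hN₀⟩ := eventually_atTop.mp (hlim.eventually_lt_const (show 0 < c / 4 by positivity))
  refine ⟨N₀ + 1, fun N hN w hw0 hwr hZ => ?_⟩
  have hlt := hN₀ N (by omega)
  have hw1 : ‖w‖ < 1 := hwr.trans_lt hr
  -- The vanishing of the polynomial, after division by `w`.
  have hz : ∑' k : ℕ, w ^ k * (((N : ℝ) ^ s * convPow κ (k + 1) N : ℝ) : ℂ) = 0 := by
    rw [tsum_eq_sum (s := Finset.range N)]
    · have e1 : polyZ κ w N = w * ∑ k ∈ Finset.range N, w ^ k * (convPow κ (k + 1) N : ℂ) := by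
        have : N ≠ 0 := by omega
        rw [polyZ, Finset.sum_range_succ', Finset.mul_sum]
        simp only [convPow, this, if_false, Complex.ofReal_zero, mul_zero, add_zero]
        exact Finset.sum_congr rfl fun k _ => by ring
      rw [e1] at hZ
      have e2 := (mul_eq_zero.mp hZ).resolve_left hw0
      have e3 : ∑ k ∈ Finset.range N, w ^ k * (((N : ℝ) ^ s * convPow κ (k + 1) N : ℝ) : ℂ)
          = (((N : ℝ) ^ s : ℝ) : ℂ) * ∑ k ∈ Finset.range N, w ^ k * (convPow κ (k + 1) N : ℂ) := by
        rw [Finset.mul_sum]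
        refine Finset.sum_congr rfl fun k _ => ?_
        rw [Complex.ofReal_mul]
        ring
      rw [e3, e2, mul_zero]
    · intro k hk
      rw [Finset.mem_range] at hk
      rw [convPow_eq_zero h0 _ _ (by omega)]
      simp
  have hg : HasSum (fun k : ℕ => w ^ k * ((((k + 1 : ℕ) : ℝ) * c : ℝ) : ℂ)) (c / (1 - w) ^ 2) := by
    have e1 := (hasSum_choose_mul_geometric_of_norm_lt_one 1 hw1).mul_right (c : ℂ)
    have e2 : (c / (1 - w) ^ 2 : ℂ) = 1 / (1 - w) ^ (1 + 1) * (c : ℂ) := by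
      rw [one_add_one_eq_two, div_mul_eq_mul_div, one_mul]
    have e3 : (fun k : ℕ => w ^ k * ((((k + 1 : ℕ) : ℝ) * c : ℝ) : ℂ)) =
        fun k : ℕ => (((k + 1).choose 1 : ℕ) : ℂ) * w ^ k * (c : ℂ) := by
      funext k
      simp only [Nat.choose_one_right]
      push_cast
      ring
    rw [e2, e3]
    exact e1
  have hsum1 : Summable fun k : ℕ => w ^ k * (((N : ℝ) ^ s * convPow κ (k + 1) N : ℝ) : ℂ) := by
    refine summable_of_ne_finset_zero (s := Finset.range N) fun k hk => ?_
    rw [Finset.mem_range] at hk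
    rw [convPow_eq_zero h0 _ _ (by omega)]
    simp
  have hdiff : c / (1 - w) ^ 2 = -∑' k : ℕ, w ^ k *
      (((N : ℝ) ^ s * convPow κ (k + 1) N - ((k + 1 : ℕ) : ℝ) * c : ℝ) : ℂ) := by
    have e1 := hsum1.hasSum.sub hg
    rw [hz, zero_sub] at e1
    rw [← neg_eq_iff_eq_neg, ← e1.tsum_eq]
    refine tsum_congr fun k => ?_
    rw [Complex.ofReal_sub, mul_sub]
  have hupper : ‖(c / (1 - w) ^ 2 : ℂ)‖ < c / 4 := by
    rw [hdiff, norm_neg]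
    refine lt_of_le_of_lt (tsum_of_norm_bounded (Summable.of_nonneg_of_le
      (fun k => by positivity) (hb1 N) hbs).hasSum fun k => ?_) hlt
    rw [norm_mul, norm_pow, Complex.norm_real, Real.norm_eq_abs]
    gcongr
  have hne : (1 - w) ≠ 0 := by
    intro h
    rw [← sub_eq_zero.mp h, norm_one] at hw1
    exact lt_irrefl _ hw1
  have hle2 : ‖1 - w‖ ≤ 2 := by
    refine (norm_sub_le _ _).trans ?_
    rw [norm_one]; linarith
  have hpos : 0 < ‖1 - w‖ := norm_pos_iff.mpr hne
  rw [norm_div, norm_pow, Complex.norm_real, Real.norm_of_nonneg hc0.le,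
    div_lt_div_iff₀ (by positivity) (by norm_num)] at hupper
  nlinarith [mul_le_mul hle2 hle2 hpos.le (by norm_num)]

end Subexponential

/-! ### The generating function of the law and its divided difference -/

/-- The generating function `z ↦ ∑ κ(n) z ^ n`. -/
noncomputable def lawGF (κ : ℕ → ℝ) (z : ℂ) : ℂ := ∑' n, (κ n : ℂ) * z ^ n

/-- The divided difference of `lawGF κ`, which for `z ≠ v` is
`(lawGF κ z - lawGF κ v) / (z - v)`, written as a power series in both variables. -/
noncomputable def divDiff (κ : ℕ → ℝ) (z v : ℂ) : ℂ :=
  ∑' n, (κ n : ℂ) * ∑ i ∈ Finset.range n, z ^ i * v ^ (n - 1 - i)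

section GF

variable {κ : ℕ → ℝ}

theorem summable_lawGF (hnn : ∀ n, 0 ≤ κ n) (hκ : HasSum κ 1) {z : ℂ} (hz : ‖z‖ ≤ 1) :
    Summable fun n => ‖(κ n : ℂ) * z ^ n‖ := by
  refine Summable.of_nonneg_of_le (fun n => norm_nonneg _) (fun n => ?_) hκ.summable
  rw [norm_mul, Complex.norm_real, Real.norm_of_nonneg (hnn n), norm_pow]
  exact mul_le_of_le_one_right (hnn n) (pow_le_one₀ (norm_nonneg _) hz)

theorem norm_divDiff_term_le (hnn : ∀ n, 0 ≤ κ n) {r : ℝ} {z v : ℂ}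
    (hz : ‖z‖ ≤ r) (hv : ‖v‖ ≤ r) (n : ℕ) :
    ‖(κ n : ℂ) * ∑ i ∈ Finset.range n, z ^ i * v ^ (n - 1 - i)‖ ≤ κ n * (n * r ^ (n - 1)) := by
  have hr0 : 0 ≤ r := (norm_nonneg _).trans hz
  rw [norm_mul, Complex.norm_real, Real.norm_of_nonneg (hnn n)]
  refine mul_le_mul_of_nonneg_left ?_ (hnn n)
  calc _ ≤ ∑ i ∈ Finset.range n, r ^ (n - 1) := by
        refine norm_sum_le_of_le _ fun i hi => ?_
        rw [Finset.mem_range] at hi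
        rw [norm_mul, norm_pow, norm_pow]
        calc ‖z‖ ^ i * ‖v‖ ^ (n - 1 - i) ≤ r ^ i * r ^ (n - 1 - i) := by gcongr
          _ = r ^ (n - 1) := by rw [← pow_add]; congr 1; omega
    _ = _ := by simp

theorem summable_divDiff_bound (hnn : ∀ n, 0 ≤ κ n) (hκ : HasSum κ 1) {r : ℝ}
    (hr0 : 0 ≤ r) (hr : r < 1) : Summable fun n : ℕ => κ n * (n * r ^ (n - 1)) := by
  have e1 : Summable fun n : ℕ => (n : ℝ) * r ^ (n - 1) := by
    rw [← summable_nat_add_iff 1]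
    have e2 := (hasSum_choose_mul_geometric_of_norm_lt_one 1
      (show ‖r‖ < 1 by rwa [Real.norm_of_nonneg hr0])).summable
    simpa using e2
  refine Summable.of_nonneg_of_le (fun n => mul_nonneg (hnn n) (by positivity)) (fun n => ?_) e1
  exact mul_le_of_le_one_left (by positivity) (le_hasSum hκ n fun m _ => hnn m)

theorem divDiff_mul_sub (hnn : ∀ n, 0 ≤ κ n) (hκ : HasSum κ 1) {z v : ℂ}
    (hz : ‖z‖ < 1) (hv : ‖v‖ < 1) : divDiff κ z v * (z - v) = lawGF κ z - lawGF κ v := by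
  rw [lawGF, lawGF, ← Summable.tsum_sub (summable_lawGF hnn hκ hz.le).of_norm
    (summable_lawGF hnn hκ hv.le).of_norm, divDiff, ← tsum_mul_right]
  refine tsum_congr fun n => ?_
  rw [mul_assoc, geom_sum₂_mul, mul_sub]

theorem continuousOn_divDiff (hnn : ∀ n, 0 ≤ κ n) (hκ : HasSum κ 1) :
    ContinuousOn (fun p : ℂ × ℂ => divDiff κ p.1 p.2) (Metric.ball 0 1 ×ˢ Metric.ball 0 1) := by
  rintro ⟨z, v⟩ ⟨hz, hv⟩
  simp only [mem_ball_zero_iff] at hz hv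
  obtain ⟨r, hr1, hr⟩ := exists_between (max_lt hz hv)
  rw [max_lt_iff] at hr1
  have hc : ContinuousOn (fun p : ℂ × ℂ => divDiff κ p.1 p.2)
      (Metric.ball 0 r ×ˢ Metric.ball 0 r) := by
    refine continuousOn_tsum (fun n => by fun_prop)
      (summable_divDiff_bound hnn hκ ((norm_nonneg z).trans hr1.1.le) hr) ?_
    rintro n ⟨a, b⟩ ⟨ha, hb⟩
    simp only [mem_ball_zero_iff] at ha hb
    exact norm_divDiff_term_le hnn ha.le hb.le n
  refine (hc.continuousAt ?_).continuousWithinAt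
  exact (Metric.isOpen_ball.prod Metric.isOpen_ball).mem_nhds
    ⟨mem_ball_zero_iff.mpr hr1.1, mem_ball_zero_iff.mpr hr1.2⟩

theorem continuousAt_divDiff (hnn : ∀ n, 0 ≤ κ n) (hκ : HasSum κ 1) {z v : ℂ}
    (hz : ‖z‖ < 1) (hv : ‖v‖ < 1) : ContinuousAt (fun p : ℂ × ℂ => divDiff κ p.1 p.2) (z, v) :=
  (continuousOn_divDiff hnn hκ).continuousAt
    ((Metric.isOpen_ball.prod Metric.isOpen_ball).mem_nhds
      ⟨mem_ball_zero_iff.mpr hz, mem_ball_zero_iff.mpr hv⟩)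

theorem differentiableAt_divDiff (hnn : ∀ n, 0 ≤ κ n) (hκ : HasSum κ 1) {z v : ℂ}
    (hz : ‖z‖ < 1) (hv : ‖v‖ < 1) : DifferentiableAt ℂ (fun v => divDiff κ z v) v := by
  obtain ⟨r, hr1, hr⟩ := exists_between (max_lt hz hv)
  rw [max_lt_iff] at hr1
  have hc : DifferentiableOn ℂ (fun v => divDiff κ z v) (Metric.ball 0 r) := by
    refine Complex.differentiableOn_tsum_of_summable_norm
      (summable_divDiff_bound hnn hκ ((norm_nonneg z).trans hr1.1.le) hr)
      (fun n => by fun_prop) Metric.isOpen_ball ?_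
    intro n b hb
    rw [mem_ball_zero_iff] at hb
    exact norm_divDiff_term_le hnn hr1.1.le hb.le n
  exact hc.differentiableAt (Metric.isOpen_ball.mem_nhds (mem_ball_zero_iff.mpr hr1.2))

theorem differentiableOn_lawGF (hnn : ∀ n, 0 ≤ κ n) (hκ : HasSum κ 1) :
    DifferentiableOn ℂ (lawGF κ) (Metric.ball 0 1) := by
  refine Complex.differentiableOn_tsum_of_summable_norm hκ.summable (fun n => by fun_prop)
    Metric.isOpen_ball ?_
  intro n z hz
  rw [mem_ball_zero_iff] at hz
  rw [norm_mul, Complex.norm_real, Real.norm_of_nonneg (hnn n), norm_pow]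
  exact mul_le_of_le_one_right (hnn n) (pow_le_one₀ (norm_nonneg _) hz.le)

theorem hasStrictDerivAt_lawGF (hnn : ∀ n, 0 ≤ κ n) (hκ : HasSum κ 1) {z : ℂ} (hz : ‖z‖ < 1) :
    HasStrictDerivAt (lawGF κ) (divDiff κ z z) z := by
  have hmem : Metric.ball (0 : ℂ) 1 ∈ nhds z :=
    Metric.isOpen_ball.mem_nhds (mem_ball_zero_iff.mpr hz)
  have e1 := ((differentiableOn_lawGF hnn hκ).analyticAt hmem).hasStrictDerivAt
  have e2 : HasDerivAt (lawGF κ) (divDiff κ z z) z := by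
    rw [hasDerivAt_iff_tendsto_slope]
    have e3 : ContinuousAt (fun y => divDiff κ y z) z :=
      (continuousAt_divDiff hnn hκ hz hz).comp (f := fun y : ℂ => (y, z)) (by fun_prop)
    refine (e3.tendsto.mono_left nhdsWithin_le_nhds).congr' ?_
    filter_upwards [self_mem_nhdsWithin, mem_nhdsWithin_of_mem_nhds hmem] with y hy hy1
    rw [slope_def_field, ← divDiff_mul_sub hnn hκ (mem_ball_zero_iff.mp hy1) hz,
      mul_div_cancel_right₀ _ (sub_ne_zero.mpr hy)]
  rwa [e2.deriv] at e1

/-- On the disc `|v| ≤ x` the value `lawGF κ x` is taken only at `x`, and there only to first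
order. Since `κ 1 > 0`, the term of degree one already forces `Re v = x`. -/
theorem divDiff_ne_zero (hnn : ∀ n, 0 ≤ κ n) (h1 : 0 < κ 1) (hκ : HasSum κ 1) {x : ℝ}
    (hx0 : 0 < x) (hx : x < 1) {v : ℂ} (hv : ‖v‖ ≤ x) : divDiff κ x v ≠ 0 := by
  have hxn : ‖(x : ℂ)‖ = x := by rw [Complex.norm_real, Real.norm_of_nonneg hx0.le]
  by_cases hvx : v = x
  · subst hvx
    have hs := summable_divDiff_bound hnn hκ hx0.le hx
    have e1 : divDiff κ x x = ((∑' n : ℕ, κ n * (n * x ^ (n - 1)) : ℝ) : ℂ) := by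
      rw [divDiff, Complex.ofReal_tsum]
      refine tsum_congr fun n => ?_
      have : ∀ i ∈ Finset.range n, (x : ℂ) ^ i * (x : ℂ) ^ (n - 1 - i) = (x : ℂ) ^ (n - 1) := by
        intro i hi
        rw [Finset.mem_range] at hi
        rw [← pow_add]
        congr 1
        omega
      rw [Finset.sum_congr rfl this]
      simp
    rw [e1]
    refine Complex.ofReal_ne_zero.mpr (ne_of_gt ?_)
    refine hs.tsum_pos (fun n => mul_nonneg (hnn n) (by positivity)) 1 ?_
    simpa using h1
  · intro h
    have e1 := divDiff_mul_sub hnn hκ (z := x) (v := v) (by rwa [hxn]) (hv.trans_lt hx)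
    rw [h, zero_mul] at e1
    have sx := (summable_lawGF hnn hκ (z := x) (by rw [hxn]; exact hx.le)).of_norm.hasSum
    have sv := (summable_lawGF hnn hκ (z := v) (hv.trans hx.le)).of_norm.hasSum
    have hd := Complex.hasSum_re (sx.sub sv)
    rw [show (∑' n, (κ n : ℂ) * (x : ℂ) ^ n) - ∑' n, (κ n : ℂ) * v ^ n = 0 from e1.symm,
      Complex.zero_re] at hd
    have hre : ∀ n, ((κ n : ℂ) * (x : ℂ) ^ n - (κ n : ℂ) * v ^ n).re =
        κ n * (x ^ n - (v ^ n).re) := by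
      intro n
      rw [← mul_sub, Complex.re_ofReal_mul, Complex.sub_re, ← Complex.ofReal_pow,
        Complex.ofReal_re]
    have hnn' : ∀ n, 0 ≤ κ n * (x ^ n - (v ^ n).re) := by
      intro n
      refine mul_nonneg (hnn n) (sub_nonneg.mpr ?_)
      calc (v ^ n).re ≤ ‖v ^ n‖ := Complex.re_le_norm _
        _ = ‖v‖ ^ n := norm_pow _ _
        _ ≤ x ^ n := by gcongr
    have hd' : HasSum (fun n => κ n * (x ^ n - (v ^ n).re)) 0 := by
      rw [← funext hre]
      exact hd
    have h0 := congrFun ((hasSum_zero_iff_of_nonneg hnn').mp hd') 1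
    simp only [pow_one, Pi.zero_apply, mul_eq_zero, h1.ne', false_or] at h0
    have hrex : v.re = x := by linarith
    have hsq : v.re * v.re + v.im * v.im ≤ x * x := by
      rw [← Complex.normSq_apply, Complex.normSq_eq_norm_sq, sq]
      exact mul_le_mul hv hv (norm_nonneg _) hx0.le
    have him : v.im = 0 := by
      rw [hrex] at hsq
      nlinarith [mul_self_nonneg v.im]
    exact hvx (Complex.ext (by simpa using hrex) (by simpa using him))

theorem exists_lawGF_eq (h0 : κ 0 = 0) (hnn : ∀ n, 0 ≤ κ n) (hκ : HasSum κ 1) {y : ℝ}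
    (hy0 : 0 < y) (hy : y < 1) : ∃ x : ℝ, 0 < x ∧ x < 1 ∧ lawGF κ x = y := by
  have hcont : ContinuousOn (fun x : ℝ => ∑' n, κ n * x ^ n) (Set.Icc 0 1) := by
    refine continuousOn_tsum (fun n => by fun_prop) hκ.summable ?_
    rintro n x ⟨hx0, hx1⟩
    rw [norm_mul, Real.norm_of_nonneg (hnn n), norm_pow, Real.norm_of_nonneg hx0]
    exact mul_le_of_le_one_right (hnn n) (pow_le_one₀ hx0 hx1)
  have f0 : ∑' n, κ n * (0 : ℝ) ^ n = 0 := by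
    rw [← tsum_zero]
    refine tsum_congr fun n => ?_
    rcases Nat.eq_zero_or_pos n with h | h
    · simp [h, h0]
    · simp [h.ne']
  have f1 : ∑' n, κ n * (1 : ℝ) ^ n = 1 := by simpa using hκ.tsum_eq
  have hmem : y ∈ Set.Icc (∑' n, κ n * (0 : ℝ) ^ n) (∑' n, κ n * (1 : ℝ) ^ n) := by
    rw [f0, f1]
    exact ⟨hy0.le, hy.le⟩
  obtain ⟨x, ⟨hx0, hx1⟩, hxy⟩ := intermediate_value_Icc zero_le_one hcont hmem
  simp only at hxy
  refine ⟨x, hx0.lt_of_ne ?_, hx1.lt_of_ne ?_, ?_⟩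
  · rintro rfl
    rw [f0] at hxy
    exact hy0.ne hxy
  · rintro rfl
    rw [f1] at hxy
    exact hy.ne' hxy
  · rw [← hxy, lawGF, Complex.ofReal_tsum]
    push_cast
    rfl

/-! ### The generating function of the partition functions -/

theorem norm_polyZ_le (hnn : ∀ n, 0 ≤ κ n) (hκ : HasSum κ 1) (w : ℂ) (N : ℕ) :
    ‖polyZ κ w N‖ ≤ (2 * (1 + ‖w‖)) ^ N := by
  have hw := norm_nonneg w
  calc ‖polyZ κ w N‖ ≤ ∑ k ∈ Finset.range (N + 1), (1 + ‖w‖) ^ N := by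
        refine norm_sum_le_of_le _ fun k hk => ?_
        rw [Finset.mem_range] at hk
        have e1 : convPow κ k N ≤ 1 :=
          le_hasSum (hasSum_convPow hκ k) N fun n _ => convPow_nonneg hnn k n
        rw [norm_mul, norm_pow, Complex.norm_real, Real.norm_of_nonneg (convPow_nonneg hnn k N)]
        calc ‖w‖ ^ k * convPow κ k N ≤ ‖w‖ ^ k * 1 := by gcongr
          _ ≤ (1 + ‖w‖) ^ k := by rw [mul_one]; gcongr; linarith
          _ ≤ (1 + ‖w‖) ^ N := pow_le_pow_right₀ (by linarith) (by omega)
    _ = ((N + 1 : ℕ) : ℝ) * (1 + ‖w‖) ^ N := by simp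
    _ ≤ 2 ^ N * (1 + ‖w‖) ^ N := by
        gcongr
        exact_mod_cast Nat.lt_two_pow_self
    _ = _ := by rw [mul_pow]

/-- Near `v = 0`, `∑ Z_n v ^ n = 1 / (1 - w lawGF κ v)`. -/
theorem exists_hasSum_polyZ (h0 : κ 0 = 0) (hnn : ∀ n, 0 ≤ κ n) (hκ : HasSum κ 1) (w : ℂ) {v : ℂ}
    (hv : ‖v‖ < (2 * (1 + ‖w‖))⁻¹) :
    ∃ U : ℂ, HasSum (fun n => polyZ κ w n * v ^ n) U ∧ U * (1 - w * lawGF κ v) = 1 := by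
  have hw := norm_nonneg w
  have hB : 0 < 2 * (1 + ‖w‖) := by positivity
  have hv1 : ‖v‖ ≤ 1 := hv.le.trans (inv_le_one_of_one_le₀ (by linarith))
  have hq : 2 * (1 + ‖w‖) * ‖v‖ < 1 := by
    calc 2 * (1 + ‖w‖) * ‖v‖ < 2 * (1 + ‖w‖) * (2 * (1 + ‖w‖))⁻¹ := by gcongr
      _ = 1 := mul_inv_cancel₀ hB.ne'
  have hsn : Summable fun n => ‖polyZ κ w n * v ^ n‖ := by
    refine Summable.of_nonneg_of_le (fun n => norm_nonneg _) (fun n => ?_)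
      (summable_geometric_of_lt_one (by positivity) hq)
    rw [norm_mul, norm_pow, mul_pow]
    gcongr
    exact norm_polyZ_le hnn hκ w n
  refine ⟨_, hsn.of_norm.hasSum, ?_⟩
  have hprod := tsum_mul_tsum_eq_tsum_sum_antidiagonal_of_summable_norm
    (summable_lawGF hnn hκ hv1) hsn
  have hterm : ∀ n, w * ∑ p ∈ Finset.HasAntidiagonal.antidiagonal n,
      ((κ p.1 : ℂ) * v ^ p.1) * (polyZ κ w p.2 * v ^ p.2) =
      polyZ κ w n * v ^ n - if n = 0 then 1 else 0 := by
    intro n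
    have e1 : ∑ p ∈ Finset.HasAntidiagonal.antidiagonal n,
        ((κ p.1 : ℂ) * v ^ p.1) * (polyZ κ w p.2 * v ^ p.2) =
        (∑ p ∈ Finset.HasAntidiagonal.antidiagonal n, (κ p.1 : ℂ) * polyZ κ w p.2) * v ^ n := by
      rw [Finset.sum_mul]
      refine Finset.sum_congr rfl fun p hp => ?_
      rw [Finset.HasAntidiagonal.mem_antidiagonal] at hp
      rw [← hp, pow_add]
      ring
    have e2 := polyZ_renewal h0 w n
    have e3 : (if n = 0 then (1 : ℂ) else 0) * v ^ n = if n = 0 then 1 else 0 := by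
      by_cases hn : n = 0 <;> simp [hn]
    rw [e1, ← mul_assoc, ← e3, ← sub_mul]
    congr 1
    rw [e2]
    ring
  have hsum : w * (lawGF κ v * ∑' n, polyZ κ w n * v ^ n) = (∑' n, polyZ κ w n * v ^ n) - 1 := by
    rw [lawGF, hprod, ← tsum_mul_left, tsum_congr hterm,
      Summable.tsum_sub hsn.of_norm (hasSum_ite_eq 0 (1 : ℂ)).summable, tsum_ite_eq]
  linear_combination -hsum

/-- Let `w = 1 / lawGF κ z`. Since `(z - v) ∑ Z_n v ^ n = lawGF κ z / divDiff κ z v` extends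
analytically to `|v| < ρ` with `ρ > |z|`, the numbers `z Z_n - Z_{n-1}` decay like `ρ ^ (-n)`.
Multiplied by `z ^ n` they telescope, which gives the limit of `z ^ (N + 1) Z_N` with an explicit
error. -/
theorem polyZ_asymptotic (h0 : κ 0 = 0) (hnn : ∀ n, 0 ≤ κ n) (hκ : HasSum κ 1) {z : ℂ} {ρ M : ℝ}
    (hzρ : ‖z‖ < ρ) (hρ : ρ < 1) (hz : lawGF κ z ≠ 0)
    (hne : ∀ v : ℂ, ‖v‖ ≤ ρ → divDiff κ z v ≠ 0)
    (hM : ∀ v : ℂ, ‖v‖ ≤ ρ → ‖lawGF κ z / divDiff κ z v‖ ≤ M) (N : ℕ) :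
    ‖z ^ (N + 1) * polyZ κ (lawGF κ z)⁻¹ N - lawGF κ z / divDiff κ z z‖ ≤
      M * (‖z‖ / ρ) ^ (N + 1) / (1 - ‖z‖ / ρ) := by
  have hρ0 : 0 < ρ := (norm_nonneg z).trans_lt hzρ
  set w := (lawGF κ z)⁻¹ with hw
  set D : ℂ → ℂ := fun v => lawGF κ z / divDiff κ z v with hD
  have hdiff : DifferentiableOn ℂ D (Metric.closedBall 0 ρ) := by
    intro v hv
    rw [mem_closedBall_zero_iff] at hv
    exact ((differentiableAt_const _).div (differentiableAt_divDiff hnn hκ (hzρ.trans hρ)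
      (hv.trans_lt hρ)) (hne v hv)).differentiableWithinAt
  set d : ℕ → ℂ := fun n => (n.factorial : ℂ)⁻¹ * iteratedDeriv n D 0 with hd
  have htaylor : ∀ v : ℂ, ‖v‖ < ρ → HasSum (fun n => d n * v ^ n) (D v) := by
    intro v hv
    have e1 := Complex.hasSum_taylorSeries_on_ball (hdiff.mono Metric.ball_subset_closedBall)
      (mem_ball_zero_iff.mpr hv)
    refine (Eq.mp ?_ e1)
    congr 1
    funext n
    simp only [hd, sub_zero, smul_eq_mul]
    ring
  have hdn : ∀ n, ‖d n‖ ≤ M / ρ ^ n := by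
    intro n
    have e1 := Complex.norm_iteratedDeriv_le_of_forall_mem_sphere_norm_le n hρ0
      (DifferentiableOn.diffContOnCl_ball hdiff subset_rfl) (C := M)
      (fun v hv => hM v (mem_sphere_zero_iff_norm.mp hv).le)
    have hf : (0 : ℝ) < n.factorial := by positivity
    rw [hd, norm_mul, norm_inv, Complex.norm_natCast, inv_mul_le_iff₀ hf, ← mul_div_assoc]
    exact e1
  set e : ℕ → ℂ := fun n => z * polyZ κ w n - if n = 0 then 0 else polyZ κ w (n - 1) with he
  have hesum : ∀ᶠ v in nhds (0 : ℂ), HasSum (fun n => e n * v ^ n) (D v) := by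
    have hpos : 0 < min (2 * (1 + ‖w‖))⁻¹ ρ := by positivity
    filter_upwards [Metric.ball_mem_nhds (0 : ℂ) hpos] with v hv
    rw [mem_ball_zero_iff, lt_min_iff] at hv
    obtain ⟨U, hU, hU1⟩ := exists_hasSum_polyZ h0 hnn hκ w hv.1
    have s1 := hU.mul_left z
    have s2 : HasSum (fun n => (if n = 0 then 0 else polyZ κ w (n - 1)) * v ^ n) (v * U) := by
      rw [← hasSum_nat_add_iff' 1]
      have s3 := hU.mul_left v
      simp only [Finset.range_one, Finset.sum_singleton, if_true, zero_mul, sub_zero,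
        Nat.add_sub_cancel, Nat.succ_ne_zero, if_false]
      refine Eq.mp ?_ s3
      congr 1
      funext n
      rw [pow_succ]
      ring
    have hval : D v = z * U - v * U := by
      have e1 := divDiff_mul_sub hnn hκ (hzρ.trans hρ) (hv.2.trans hρ)
      simp only [hD]
      rw [div_eq_iff (hne v hv.2.le)]
      have e2 : lawGF κ z * w = 1 := mul_inv_cancel₀ hz
      linear_combination (-U) * e1 - lawGF κ z * hU1 - (lawGF κ v * U) * e2
    rw [hval]
    refine Eq.mp ?_ (s1.sub s2)
    congr 1
    funext n
    simp only [he]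
    ring
  have hde : e = d := by
    have p1 : HasFPowerSeriesAt D (FormalMultilinearSeries.ofScalars ℂ e) 0 := by
      rw [hasFPowerSeriesAt_iff]
      filter_upwards [hesum] with v hv
      simpa [FormalMultilinearSeries.coeff_ofScalars, mul_comm] using hv
    have p2 : HasFPowerSeriesAt D (FormalMultilinearSeries.ofScalars ℂ d) 0 := by
      rw [hasFPowerSeriesAt_iff]
      filter_upwards [Metric.ball_mem_nhds (0 : ℂ) hρ0] with v hv
      have := htaylor v (mem_ball_zero_iff.mp hv)
      simpa [FormalMultilinearSeries.coeff_ofScalars, mul_comm] using this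
    funext n
    rw [← FormalMultilinearSeries.coeff_ofScalars (𝕜 := ℂ) (p := e) (n := n),
      p1.eq_formalMultilinearSeries p2, FormalMultilinearSeries.coeff_ofScalars]
  have htel : ∀ N, ∑ n ∈ Finset.range (N + 1), d n * z ^ n = z ^ (N + 1) * polyZ κ w N := by
    intro N
    rw [← hde]
    induction N with
    | zero => simp [he, polyZ_zero]
    | succ N ih =>
      rw [Finset.sum_range_succ, ih]
      simp only [he, Nat.add_sub_cancel, Nat.succ_ne_zero, if_false]
      ring
  rw [← htel]
  refine norm_sub_le_of_geometric_bound_of_hasSum ((div_lt_one hρ0).mpr hzρ) (fun n => ?_)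
    (htaylor z hzρ) (N + 1)
  rw [norm_mul, norm_pow, div_pow, mul_div_assoc', mul_div_right_comm]
  exact mul_le_mul_of_nonneg_right (hdn n) (by positivity)

end GF

/-! ### Neighbourhoods of the positive half-line -/

section Local

variable {κ : ℕ → ℝ}

/-- By the tube lemma, `divDiff_ne_zero` extends to `z` near `x` and a slightly larger disc. -/
theorem exists_divDiff_ne_zero (hnn : ∀ n, 0 ≤ κ n) (h1 : 0 < κ 1) (hκ : HasSum κ 1)
    {x : ℝ} (hx0 : 0 < x) (hx : x < 1) :
    ∃ ρ η : ℝ, x < ρ ∧ ρ < 1 ∧ 0 < η ∧ ∀ z v : ℂ, z ∈ Metric.closedBall (x : ℂ) η → ‖v‖ ≤ ρ →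
      ‖z‖ < 1 ∧ divDiff κ z v ≠ 0 := by
  have hxn : ‖(x : ℂ)‖ = x := by rw [Complex.norm_real, Real.norm_of_nonneg hx0.le]
  have hopen : IsOpen ((Metric.ball (0 : ℂ) 1 ×ˢ Metric.ball (0 : ℂ) 1) ∩
      (fun p : ℂ × ℂ => divDiff κ p.1 p.2) ⁻¹' {0}ᶜ) :=
    (continuousOn_divDiff hnn hκ).isOpen_inter_preimage
      (Metric.isOpen_ball.prod Metric.isOpen_ball) isOpen_compl_singleton
  have hmem : ∀ z v : ℂ, (z, v) ∈ (Metric.ball (0 : ℂ) 1 ×ˢ Metric.ball (0 : ℂ) 1) ∩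
      (fun p : ℂ × ℂ => divDiff κ p.1 p.2) ⁻¹' {0}ᶜ ↔
      (‖z‖ < 1 ∧ ‖v‖ < 1) ∧ divDiff κ z v ≠ 0 := fun z v => by
    rw [Set.mem_inter_iff, Set.mem_prod, mem_ball_zero_iff, mem_ball_zero_iff]
    exact Iff.rfl
  have hbase : ({(x : ℂ)} : Set ℂ) ×ˢ Metric.closedBall (0 : ℂ) x ⊆
      (Metric.ball (0 : ℂ) 1 ×ˢ Metric.ball (0 : ℂ) 1) ∩
      (fun p : ℂ × ℂ => divDiff κ p.1 p.2) ⁻¹' {0}ᶜ := by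
    rintro ⟨z, v⟩ hzv
    rw [Set.mem_prod, Set.mem_singleton_iff, mem_closedBall_zero_iff] at hzv
    obtain ⟨hz, hv⟩ : z = x ∧ ‖v‖ ≤ x := hzv
    rw [hmem, hz]
    exact ⟨⟨hxn.trans_lt hx, hv.trans_lt hx⟩, divDiff_ne_zero hnn h1 hκ hx0 hx hv⟩
  generalize (Metric.ball (0 : ℂ) 1 ×ˢ Metric.ball (0 : ℂ) 1) ∩
      (fun p : ℂ × ℂ => divDiff κ p.1 p.2) ⁻¹' {0}ᶜ = S at hopen hmem hbase
  obtain ⟨u, t, hu, ht, hxu, hxt, hut⟩ := generalized_tube_lemma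
    isCompact_singleton (isCompact_closedBall (0 : ℂ) x) hopen hbase
  rw [Set.singleton_subset_iff] at hxu
  obtain ⟨δ, hδ, hδt⟩ := (isCompact_closedBall (0 : ℂ) x).exists_cthickening_subset_open ht hxt
  rw [cthickening_closedBall hδ.le hx0.le] at hδt
  obtain ⟨η, hη, hηu⟩ := Metric.nhds_basis_closedBall.mem_iff.mp (hu.mem_nhds hxu)
  have hsub : ∀ z v : ℂ, z ∈ u → ‖v‖ ≤ δ + x → (‖z‖ < 1 ∧ ‖v‖ < 1) ∧ divDiff κ z v ≠ 0 :=
    fun z v hz hv => (hmem z v).mp (hut (Set.mk_mem_prod hz (hδt (mem_closedBall_zero_iff.mpr hv))))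
  have hρn : ‖((δ + x : ℝ) : ℂ)‖ = δ + x := by
    rw [Complex.norm_real, Real.norm_of_nonneg (by linarith)]
  refine ⟨δ + x, η, by linarith, ?_, hη, fun z v hz hv => ?_⟩
  · have := (hsub x ((δ + x : ℝ) : ℂ) hxu hρn.le).1.2
    rwa [hρn] at this
  · have := hsub z v (hηu hz) hv
    exact ⟨this.1.1, this.2⟩

theorem continuousAt_lawGF_div (hnn : ∀ n, 0 ≤ κ n) (hκ : HasSum κ 1) {z v : ℂ}
    (hz : ‖z‖ < 1) (hv : ‖v‖ < 1) (hzv : divDiff κ z v ≠ 0) :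
    ContinuousAt (fun p : ℂ × ℂ => lawGF κ p.1 / divDiff κ p.1 p.2) (z, v) :=
  ((hasStrictDerivAt_lawGF hnn hκ hz).hasDerivAt.continuousAt.comp
    (f := Prod.fst) (x := (z, v)) continuousAt_fst).div (continuousAt_divDiff hnn hκ hz hv) hzv

/-- The estimate `polyZ_asymptotic` holds with uniform constants for `z` near `x`. -/
theorem polyZ_ne_zero_near (h0 : κ 0 = 0) (hnn : ∀ n, 0 ≤ κ n) (h1 : 0 < κ 1) (hκ : HasSum κ 1)
    {x : ℝ} (hx0 : 0 < x) (hx : x < 1) (hgf : lawGF κ x ≠ 0) :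
    ∃ N₀ : ℕ, ∀ᶠ z in nhds (x : ℂ), ∀ N ≥ N₀, polyZ κ (lawGF κ z)⁻¹ N ≠ 0 := by
  have hxn : ‖(x : ℂ)‖ = x := by rw [Complex.norm_real, Real.norm_of_nonneg hx0.le]
  obtain ⟨ρ, η, hxρ, hρ, hη, hsub⟩ := exists_divDiff_ne_zero hnn h1 hκ hx0 hx
  have hρ0 : 0 < ρ := hx0.trans hxρ
  have hxη : (x : ℂ) ∈ Metric.closedBall (x : ℂ) η := Metric.mem_closedBall_self hη.le
  have hcont : ∀ z v : ℂ, z ∈ Metric.closedBall (x : ℂ) η → ‖v‖ ≤ ρ →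
      ContinuousAt (fun p : ℂ × ℂ => lawGF κ p.1 / divDiff κ p.1 p.2) (z, v) := fun z v hz hv =>
    continuousAt_lawGF_div hnn hκ (hsub z v hz hv).1 (hv.trans_lt hρ) (hsub z v hz hv).2
  obtain ⟨M, hM⟩ : ∃ M : ℝ, ∀ z v : ℂ, z ∈ Metric.closedBall (x : ℂ) η → ‖v‖ ≤ ρ →
      ‖lawGF κ z / divDiff κ z v‖ ≤ M := by
    obtain ⟨M, hM⟩ := ((isCompact_closedBall (x : ℂ) η).prod
      (isCompact_closedBall (0 : ℂ) ρ)).exists_bound_of_continuousOn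
      (f := fun p : ℂ × ℂ => lawGF κ p.1 / divDiff κ p.1 p.2) (by
        rintro ⟨z, v⟩ hp
        rw [Set.mem_prod, mem_closedBall_zero_iff] at hp
        exact (hcont z v hp.1 hp.2).continuousWithinAt)
    exact ⟨M, fun z v hz hv => hM (z, v) (Set.mk_mem_prod hz (mem_closedBall_zero_iff.mpr hv))⟩
  have hM0 : 0 ≤ M := (norm_nonneg _).trans (hM x x hxη (hxn.trans_le hxρ.le))
  have hDx : 0 < ‖lawGF κ x / divDiff κ x x‖ :=
    norm_pos_iff.mpr (div_ne_zero hgf (hsub x x hxη (hxn.trans_le hxρ.le)).2)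
  have hDcont : ContinuousAt (fun z => lawGF κ z / divDiff κ z z) (x : ℂ) :=
    (hcont x x hxη (hxn.trans_le hxρ.le)).comp (f := fun z : ℂ => (z, z)) (x := (x : ℂ))
      (by fun_prop)
  -- A positive number below the modulus of the limit at `z = x` is a lower bound nearby.
  obtain ⟨m, hm0, hmlt⟩ := exists_between hDx
  have hev1 : ∀ᶠ z in nhds (x : ℂ), m < ‖lawGF κ z / divDiff κ z z‖ :=
    hDcont.norm.eventually_const_lt hmlt
  obtain ⟨σ, hxσ, hσρ⟩ := exists_between hxρ
  have hev2 : ∀ᶠ z in nhds (x : ℂ), ‖z‖ < σ :=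
    continuous_norm.continuousAt.eventually_lt_const (hxn.trans_lt hxσ)
  have hev3 : ∀ᶠ z in nhds (x : ℂ), lawGF κ z ≠ 0 :=
    (hasStrictDerivAt_lawGF hnn hκ (hxn.trans_lt hx)).hasDerivAt.continuousAt.eventually_ne hgf
  have hev4 : ∀ᶠ z in nhds (x : ℂ), z ∈ Metric.closedBall (x : ℂ) η :=
    Metric.closedBall_mem_nhds _ hη
  have hq0 : 0 ≤ σ / ρ := div_nonneg (hx0.trans hxσ).le hρ0.le
  have hq1 : σ / ρ < 1 := (div_lt_one hρ0).mpr hσρ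
  have hlim : Tendsto (fun N : ℕ => M * (σ / ρ) ^ (N + 1) / (1 - σ / ρ)) atTop (nhds 0) := by
    have e1 := ((tendsto_pow_atTop_nhds_zero_of_lt_one hq0 hq1).comp
      (tendsto_add_atTop_nat 1)).const_mul M |>.div_const (1 - σ / ρ)
    rw [mul_zero, zero_div] at e1
    exact e1
  obtain ⟨N₀, hN₀⟩ := eventually_atTop.mp (hlim.eventually_lt_const hm0)
  refine ⟨N₀, ?_⟩
  filter_upwards [hev1, hev2, hev3, hev4] with z hz1 hz2 hz3 hz4 N hN hZ
  have e1 := polyZ_asymptotic h0 hnn hκ (M := M) (hz2.trans hσρ) hρ hz3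
    (fun v hv => (hsub z v hz4 hv).2) (fun v hv => hM z v hz4 hv) N
  rw [hZ, mul_zero, zero_sub, norm_neg] at e1
  have e2 : ‖z‖ / ρ ≤ σ / ρ := div_le_div_of_nonneg_right hz2.le hρ0.le
  have e3 : M * (‖z‖ / ρ) ^ (N + 1) / (1 - ‖z‖ / ρ) ≤
      M * (σ / ρ) ^ (N + 1) / (1 - σ / ρ) := by
    have : 0 < 1 - σ / ρ := sub_pos.mpr hq1
    gcongr
  linarith [hN₀ N hN]

/-- Since `lawGF κ` is a local homeomorphism at `x`, every `h` near `t > 0` is reached as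
`e^h = 1 / lawGF κ z` with `z` near `x`. -/
theorem polyZ_exp_ne_zero_near (h0 : κ 0 = 0) (hnn : ∀ n, 0 ≤ κ n) (h1 : 0 < κ 1)
    (hκ : HasSum κ 1) {t : ℝ} (ht : 0 < t) :
    ∃ N₀ : ℕ, ∀ᶠ h in nhds (t : ℂ), ∀ N ≥ N₀, polyZ κ (Complex.exp h) N ≠ 0 := by
  obtain ⟨x, hx0, hx, hgf⟩ := exists_lawGF_eq h0 hnn hκ (Real.exp_pos (-t))
    (Real.exp_lt_one_iff.mpr (by linarith))
  rw [Complex.ofReal_exp, Complex.ofReal_neg] at hgf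
  have hxn : ‖(x : ℂ)‖ = x := by rw [Complex.norm_real, Real.norm_of_nonneg hx0.le]
  obtain ⟨N₀, hN₀⟩ := polyZ_ne_zero_near h0 hnn h1 hκ hx0 hx (by rw [hgf]; exact Complex.exp_ne_zero _)
  refine ⟨N₀, ?_⟩
  have hmap := (hasStrictDerivAt_lawGF hnn hκ (z := x) (by rwa [hxn])).map_nhds_eq
    (divDiff_ne_zero hnn h1 hκ hx0 hx hxn.le)
  have e1 : ∀ᶠ y in map (lawGF κ) (nhds (x : ℂ)), ∀ N ≥ N₀, polyZ κ y⁻¹ N ≠ 0 :=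
    eventually_map.mpr hN₀
  rw [hmap, hgf] at e1
  have e2 : Tendsto (fun h : ℂ => Complex.exp (-h)) (nhds (t : ℂ)) (nhds (Complex.exp (-t))) :=
    Continuous.tendsto (by fun_prop) _
  filter_upwards [e2.eventually e1] with h hh
  rwa [Complex.exp_neg, inv_inv] at hh

theorem polyZ_ne_zero_strip (h0 : κ 0 = 0) (hnn : ∀ n, 0 ≤ κ n) (h1 : 0 < κ 1)
    (hκ : HasSum κ 1) {a : ℝ} (ha : 0 < a) (b : ℝ) :
    ∃ δ : ℝ, 0 < δ ∧ ∃ N₀ : ℕ, ∀ N ≥ N₀, ∀ h : ℂ, a ≤ h.re → h.re ≤ b → |h.im| < δ →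
      polyZ κ (Complex.exp h) N ≠ 0 := by
  have hS : IsCompact ((fun t : ℝ => (t : ℂ)) '' Set.Icc a b) :=
    isCompact_Icc.image Complex.continuous_ofReal
  have key : ∃ N₀ : ℕ, ∃ U : Set ℂ, IsOpen U ∧ (fun t : ℝ => (t : ℂ)) '' Set.Icc a b ⊆ U ∧
      ∀ h ∈ U, ∀ N ≥ N₀, polyZ κ (Complex.exp h) N ≠ 0 := by
    refine hS.induction_on (p := fun s => ∃ N₀ : ℕ, ∃ U : Set ℂ, IsOpen U ∧ s ⊆ U ∧
      ∀ h ∈ U, ∀ N ≥ N₀, polyZ κ (Complex.exp h) N ≠ 0) ?_ ?_ ?_ ?_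
    · exact ⟨0, ∅, isOpen_empty, subset_rfl, fun h hh => absurd hh (Set.notMem_empty h)⟩
    · rintro s t hst ⟨N₀, U, hU, htU, hN⟩
      exact ⟨N₀, U, hU, hst.trans htU, hN⟩
    · rintro s t ⟨N₁, U₁, hU₁, hs, hN₁⟩ ⟨N₂, U₂, hU₂, ht, hN₂⟩
      refine ⟨max N₁ N₂, U₁ ∪ U₂, hU₁.union hU₂, Set.union_subset_union hs ht, ?_⟩
      rintro h (hh | hh) N hN
      · exact hN₁ h hh N (le_trans (le_max_left _ _) hN)
      · exact hN₂ h hh N (le_trans (le_max_right _ _) hN)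
    · rintro _ ⟨t, ht, rfl⟩
      obtain ⟨N₀, hN₀⟩ := polyZ_exp_ne_zero_near h0 hnn h1 hκ (ha.trans_le ht.1)
      obtain ⟨U, hUsub, hU, htU⟩ := mem_nhds_iff.mp hN₀
      exact ⟨U, mem_nhdsWithin_of_mem_nhds (hU.mem_nhds htU), N₀, U, hU, subset_rfl, hUsub⟩
  obtain ⟨N₀, U, hU, hSU, hN₀⟩ := key
  obtain ⟨δ, hδ, hδU⟩ := hS.exists_thickening_subset_open hU hSU
  refine ⟨δ, hδ, N₀, fun N hN h hha hhb him => hN₀ h (hδU ?_) N hN⟩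
  rw [Metric.mem_thickening_iff]
  refine ⟨h.re, ⟨h.re, ⟨hha, hhb⟩, rfl⟩, ?_⟩
  rw [Complex.dist_of_re_eq (by simp)]
  simpa [Real.dist_eq] using him

end Local

theorem stmt0 (α : ℝ) (hα : α ∈ Set.Ioo (0 : ℝ) 1) (K : ℕ → ℝ)
    (hK : IsInterArrivalLaw α K) :
    (∃ C : ℝ, 0 < C ∧ ∃ N₀ : ℕ, ∀ N ≥ N₀, ∀ h : ℂ, C ≤ h.re → pinZ K N h ≠ 0) ∧
    (∀ ε : ℝ, 0 < ε → ∃ Nε : ℕ, ∀ N ≥ Nε, ∀ h : ℂ, h.re ≤ -ε → pinZ K N h ≠ 0) ∧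
    (∀ ε' : ℝ, 0 < ε' → ∃ C' : ℝ, 0 < C' ∧ ∃ N' : ℕ, ∀ N ≥ N',
      ∀ h : ℂ, ε' < h.re → |h.im| < C' → pinZ K N h ≠ 0) := by
  obtain ⟨hKnn, hK1, hKsum, c, hc0, hc⟩ := hK
  have h0 : lawZ K 0 = 0 := by simp [lawZ]
  have hnn : ∀ n, 0 ≤ lawZ K n := by
    intro n
    rw [lawZ]
    split_ifs with h
    · exact le_rfl
    · exact hKnn n (Nat.one_le_iff_ne_zero.mpr h)
  have h1 : 0 < lawZ K 1 := by simpa [lawZ] using hK1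
  have hκ : HasSum (lawZ K) 1 := by
    rw [← hasSum_nat_add_iff' 1]
    simpa [lawZ] using hKsum
  have hc' : Tendsto (fun n : ℕ => (n : ℝ) ^ (1 + α) * lawZ K n) atTop (nhds c) := by
    refine hc.congr' ?_
    filter_upwards [eventually_ne_atTop 0] with n hn
    rw [lawZ, if_neg hn]
  set R := 4 / lawZ K 1 ^ 2 with hR
  have hR0 : 0 < R := by positivity
  have hlarge : ∀ N : ℕ, 1 ≤ N → ∀ h : ℂ, R ≤ h.re → pinZ K N h ≠ 0 := by
    intro N hN h hh
    rw [pinZ_eq_polyZ K hN]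
    refine polyZ_ne_zero_of_large h0 hnn h1 hκ ?_ N
    rw [Complex.norm_exp]
    linarith [Real.add_one_le_exp h.re]
  refine ⟨⟨R, hR0, 1, hlarge⟩, fun ε hε => ?_, fun ε' hε' => ?_⟩
  · obtain ⟨N₀, hN₀⟩ := polyZ_ne_zero_of_small (s := 1 + α) (by linarith [hα.1])
      (by linarith [hα.2]) h0 hnn hκ hc0 hc' (Real.exp_pos (-ε)).le
      (Real.exp_lt_one_iff.mpr (by linarith))
    refine ⟨max N₀ 1, fun N hN h hh => ?_⟩
    rw [pinZ_eq_polyZ K (le_trans (le_max_right _ _) hN)]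
    refine hN₀ N (le_trans (le_max_left _ _) hN) _ (Complex.exp_ne_zero h) ?_
    rw [Complex.norm_exp]
    exact Real.exp_le_exp.mpr hh
  · obtain ⟨δ, hδ, N₀, hN₀⟩ := polyZ_ne_zero_strip h0 hnn h1 hκ hε' R
    refine ⟨δ, hδ, max N₀ 1, fun N hN h hh him => ?_⟩
    have hN1 : 1 ≤ N := le_trans (le_max_right _ _) hN
    rcases le_total R h.re with hRh | hRh
    · exact hlarge N hN1 h hRh
    · rw [pinZ_eq_polyZ K hN1]
      exact hN₀ N (le_trans (le_max_left _ _) hN) h hh.le hRh him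
end

section
/- Let K : ℕ → ℝ satisfy K(n) ≥ 0 for all n ≥ 1, K(1) > 0, ∑_{n=1}^∞ K(n) = 1, and n^{3/2}·K(n) → 1/(2√π) as n → ∞, and let Z_{N,h} be the associated pinning partition function. Then for every compact set S ⊂ ℂ, sup_{ζ ∈ S} |√N · Z_{N, ζ/√N} − I(ζ)| → 0 as N → ∞, where I(ζ) := (1/(2√π)) ∫_0^∞ x·e^{ζx − x²/4} dx. -/
/-!
Let `φ` be the generating series of `K` and `U = (1 - φ)⁻¹ = ∑_n u_n Xⁿ` that of the renewal mass
function. The coefficient of order `N ≥ 1` in `∑_k (e^h φ)^k` is `Z_{N,h}`. Since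
`1 - e^h φ = e^h (U⁻¹ - v)` with `v = 1 - e^{-h}`, this gives the expansion
`Z_{N,h} = e^{-h} ∑_j v^j u^{*(j+1)}(N)` (`Pinning.pinZ_eq_tsum`), where `u^{*j}` are the coefficients
of `U^j`. For `h = ζ/√N`, `√N v` tends to `ζ`, and it remains to understand `u^{*j}(N)`.

The strong renewal theorem `u_n ~ 1/√(π n)` (`Pinning.ren_isEquivalent`) is proved without Fourier
analysis. Sequences are compared with the coefficients of `(1 - X)^(-a)`, which are asymptotic to
`n^(a-1)/Γ(a)` and are multiplicative in `a`. The tail function `p` of `K` satisfies `u * p = 𝟙`, the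
constant sequence one, and `p * p ~ 𝟙`; moreover differentiating `U (1 - φ) = 1` gives
`n u_n = ∑_m m K(m) (u * u)_{n-m}`. This identity first yields the a priori bound `u_n = O(n^{-1/2})`
(`Pinning.bootstrap`), and then, because `m K(m) ~ p_m / 2`,
`2 n u_n ~ (p * u * u)_n = ∑_{k ≤ n} u_k ~ 2 √(n/π)`.

Consequently `N^{(1-j)/2} u^{*(j+1)}(N) → 1/Γ((j+1)/2)` for each `j` (`Pinning.pow_tendsto`), and an
exponential tilt bounds the series geometrically, uniformly in `N` (`Pinning.term_bound`). Dominated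
convergence along the joint filter `N → ∞`, `ζ → ζ₀` gives the limit `∑_j ζ₀^j/Γ((j+1)/2)`, and hence
locally uniform convergence. That this series is `I(ζ₀)` follows by termwise integration and the
duplication formula for `Γ` (`Pinning.integral_eq_limF`).
-/

open Filter Real MeasureTheory

namespace Pinning

open PowerSeries Asymptotics Finset
open scoped Topology

/-! ### The coefficients of `(1 - X)^(-a)` -/

/-- The power series `(1 - X)^(-a)`, given by its coefficients `a(a+1)⋯(a+n-1)/n!`. -/
noncomputable def stdSeries (a : ℝ) : ℝ⟦X⟧ :=
  PowerSeries.mk fun n => ∏ i ∈ range n, ((a + i) / (i + 1))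

/-- The coefficient sequence of a power series; asymptotic relations between sequences are
stated through it. -/
noncomputable def cf (A : ℝ⟦X⟧) : ℕ → ℝ := fun n => coeff n A

lemma cf_std_succ (a : ℝ) (n : ℕ) :
    cf (stdSeries a) (n + 1) = cf (stdSeries a) n * ((a + n) / (n + 1)) := by
  simp only [cf, stdSeries, coeff_mk, prod_range_succ]

lemma cf_std_zero (a : ℝ) : cf (stdSeries a) 0 = 1 := by simp [cf, stdSeries]

lemma cf_std_pos {a : ℝ} (ha : 0 < a) (n : ℕ) : 0 < cf (stdSeries a) n := by
  simp only [cf, stdSeries, coeff_mk]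
  exact prod_pos fun i _ => by positivity

lemma stdSeries_eq (a : ℝ) :
    stdSeries a = rescale (-1 : ℝ) (binomialSeries ℝ (-a)) := by
  ext n
  have key : ∀ n, cf (stdSeries a) n = (-1) ^ n * Ring.choose (-a) n := by
    intro n
    induction n with
    | zero => simp [cf_std_zero]
    | succ n ih =>
      rw [cf_std_succ, ih, Ring.choose_eq_smul, Ring.choose_eq_smul, descPochhammer_succ_right,
        Polynomial.smeval_mul, Nat.factorial_succ]
      have : (n.factorial : ℝ) ≠ 0 := by positivity
      have h2 : (n : ℝ) + 1 ≠ 0 := by positivity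
      simp [Polynomial.smeval_sub, Polynomial.smeval_natCast, pow_succ]
      field_simp
      ring
  rw [coeff_rescale, binomialSeries_coeff, smul_eq_mul, mul_one, ← key n, cf]

lemma stdSeries_add (a b : ℝ) : stdSeries (a + b) = stdSeries a * stdSeries b := by
  rw [stdSeries_eq, stdSeries_eq, stdSeries_eq, neg_add, binomialSeries_add, map_mul]

lemma cf_std_one (n : ℕ) : cf (stdSeries 1) n = 1 := by
  simp only [cf, stdSeries, coeff_mk]
  refine prod_eq_one fun i _ => ?_
  rw [add_comm, div_self]
  positivity

lemma cf_mul (A B : ℝ⟦X⟧) (n : ℕ) :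
    cf (A * B) n = ∑ p ∈ antidiagonal n, cf A p.1 * cf B p.2 := coeff_mul n A B

/-- Euler's limit formula for `Γ`, written for the coefficients of `(1 - X)^(-a)`. -/
lemma cf_std_tendsto {a : ℝ} (ha : 0 < a) :
    Tendsto (fun n : ℕ => cf (stdSeries a) n * (n : ℝ) ^ (1 - a)) atTop (𝓝 (1 / Gamma a)) := by
  have h1 : Tendsto (fun n : ℕ => (n : ℝ) / (n + a)) atTop (𝓝 1) :=
    tendsto_natCast_div_add_atTop a
  have h2 := h1.div (Real.GammaSeq_tendsto_Gamma a) (Gamma_pos_of_pos ha).ne'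
  refine h2.congr' ?_
  filter_upwards [eventually_ge_atTop 1] with n hn
  have hn' : (0 : ℝ) < n := by exact_mod_cast hn
  have hp : ∀ n : ℕ, 0 < ∏ j ∈ range n, (a + j) := fun n => prod_pos fun i _ => by positivity
  have hf : ((∏ i ∈ range n, ((i : ℝ) + 1))) = n.factorial := by
    rw [← prod_range_add_one_eq_factorial]; push_cast; rfl
  simp only [cf, stdSeries, coeff_mk, prod_div_distrib, hf, Real.GammaSeq, Pi.div_apply,
    prod_range_succ]
  rw [rpow_sub hn', rpow_one]
  have := hp n
  have h3 : (0:ℝ) < (n.factorial : ℝ) := by positivity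
  have h4 : 0 < (n : ℝ) ^ a := by positivity
  field_simp
  ring

lemma cf_std_isEquivalent {a : ℝ} (ha : 0 < a) :
    cf (stdSeries a) ~[atTop] fun n : ℕ => (n : ℝ) ^ (a - 1) / Gamma a := by
  have hG := Gamma_pos_of_pos ha
  refine isEquivalent_of_tendsto_one ?_
  have := (cf_std_tendsto ha).mul_const (Gamma a)
  rw [one_div, inv_mul_cancel₀ hG.ne'] at this
  refine this.congr' ?_
  filter_upwards [eventually_ge_atTop 1] with n hn
  have hn' : (0 : ℝ) < n := by exact_mod_cast hn
  have h4 : 0 < (n : ℝ) ^ (a - 1) := by positivity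
  rw [Pi.div_apply, show (1 - a) = -(a - 1) by ring, rpow_neg hn'.le]
  field_simp

lemma cf_std_isLittleO {a b : ℝ} (ha : 0 < a) (hab : a < b) :
    cf (stdSeries a) =o[atTop] cf (stdSeries b) := by
  have hb := ha.trans hab
  rw [isLittleO_iff_tendsto (fun n hn => absurd hn (cf_std_pos hb n).ne')]
  have h := (cf_std_tendsto ha).div (cf_std_tendsto hb) (by
    have := Gamma_pos_of_pos hb; positivity)
  have h0 : Tendsto (fun n : ℕ => (n : ℝ) ^ (-(b - a))) atTop (𝓝 0) :=
    (tendsto_rpow_neg_atTop (sub_pos.2 hab)).comp tendsto_natCast_atTop_atTop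
  have := h.mul h0
  rw [mul_zero] at this
  refine this.congr' ?_
  filter_upwards [eventually_ge_atTop 1] with n hn
  have hn' : (0 : ℝ) < n := by exact_mod_cast hn
  have e : (n : ℝ) ^ (1 - a) * (n : ℝ) ^ (-(b - a)) = (n : ℝ) ^ (1 - b) := by
    rw [← rpow_add hn']; ring_nf
  have h4 : 0 < (n : ℝ) ^ (1 - b) := by positivity
  have := cf_std_pos hb n
  rw [Pi.div_apply, div_mul_eq_mul_div, mul_assoc, e]
  field_simp

lemma exists_bound {f : ℕ → ℝ} {b : ℝ} (hb : 0 < b) (h : f =O[atTop] cf (stdSeries b)) :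
    ∃ C, 0 < C ∧ ∀ n, |f n| ≤ C * cf (stdSeries b) n := by
  obtain ⟨C, hC⟩ := (isBigO_nat_atTop_iff (f := f)
    (fun n hn => absurd hn (cf_std_pos hb n).ne')).1 h
  refine ⟨max C 1, by positivity, fun n => (hC n).trans ?_⟩
  rw [norm_of_nonneg (cf_std_pos hb n).le]
  exact mul_le_mul_of_nonneg_right (le_max_left _ _) (cf_std_pos hb n).le

lemma isBigO_of_bound {f g : ℕ → ℝ} {C : ℝ} (h : ∀ n, |f n| ≤ C * g n) : f =O[atTop] g :=
  IsBigO.of_bound |C| <| Eventually.of_forall fun n => by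
    rw [norm_eq_abs, norm_eq_abs, ← abs_mul]
    exact (h n).trans (le_abs_self _)

lemma abs_cf_mul_le {A B A' B' : ℝ⟦X⟧} (hA : ∀ n, |cf A n| ≤ cf A' n)
    (hB : ∀ n, |cf B n| ≤ cf B' n) (n : ℕ) : |cf (A * B) n| ≤ cf (A' * B') n := by
  rw [cf_mul, cf_mul]
  refine (abs_sum_le_sum_abs _ _).trans (sum_le_sum fun p _ => ?_)
  rw [abs_mul]
  exact mul_le_mul (hA _) (hB _) (abs_nonneg _) ((abs_nonneg _).trans (hA _))

lemma cf_C_mul (c : ℝ) (A : ℝ⟦X⟧) (n : ℕ) : cf (C c * A) n = c * cf A n := by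
  simp [cf]

lemma cf_add (A B : ℝ⟦X⟧) (n : ℕ) : cf (A + B) n = cf A n + cf B n := by simp [cf]

lemma cf_sub (A B : ℝ⟦X⟧) (n : ℕ) : cf (A - B) n = cf A n - cf B n := by simp [cf]

lemma isBigO_mul {A B : ℝ⟦X⟧} {a b : ℝ} (ha : 0 < a) (hb : 0 < b)
    (hA : cf A =O[atTop] cf (stdSeries a)) (hB : cf B =O[atTop] cf (stdSeries b)) :
    cf (A * B) =O[atTop] cf (stdSeries (a + b)) := by
  obtain ⟨c, -, hc⟩ := exists_bound ha hA
  obtain ⟨d, -, hd⟩ := exists_bound hb hB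
  refine isBigO_of_bound (C := c * d) fun n => ?_
  refine (abs_cf_mul_le (A' := C c * stdSeries a) (B' := C d * stdSeries b)
    (fun n => by rw [cf_C_mul]; exact hc n) (fun n => by rw [cf_C_mul]; exact hd n) n).trans ?_
  rw [mul_mul_mul_comm, ← stdSeries_add, ← map_mul, cf_C_mul]

/-- The finitely many coefficients of `B` on which the little-o bound fails are absorbed into a
multiple of the smaller sequence `stdSeries (b / 2)`, so that no shifted sequences occur. -/
lemma isLittleO_mul {A B : ℝ⟦X⟧} {a b : ℝ} (ha : 0 < a) (hb : 0 < b)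
    (hA : cf A =O[atTop] cf (stdSeries a)) (hB : cf B =o[atTop] cf (stdSeries b)) :
    cf (A * B) =o[atTop] cf (stdSeries (a + b)) := by
  obtain ⟨c, hc0, hc⟩ := exists_bound ha hA
  rw [isLittleO_iff]
  intro ε hε
  have hε' : 0 < ε / (2 * c) := by positivity
  have hb2 : 0 < b / 2 := by positivity
  obtain ⟨n₀, hn₀⟩ := eventually_atTop.1 (isLittleO_iff.1 hB hε')
  let M : ℝ := ∑ i ∈ range n₀, |cf B i| / cf (stdSeries (b / 2)) i
  have hM : ∀ n, |cf B n| ≤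
      cf (C (ε / (2 * c)) * stdSeries b + C M * stdSeries (b / 2)) n := by
    intro n
    rw [cf_add, cf_C_mul, cf_C_mul]
    have p1 := cf_std_pos hb n
    have p2 := cf_std_pos hb2 n
    have hpos : ∀ i, 0 ≤ |cf B i| / cf (stdSeries (b / 2)) i := fun i =>
      div_nonneg (abs_nonneg _) (cf_std_pos hb2 i).le
    have hM0 : 0 ≤ M := sum_nonneg fun i _ => hpos i
    rcases lt_or_ge n n₀ with h | h
    · have : |cf B n| / cf (stdSeries (b / 2)) n ≤ M :=
        single_le_sum (f := fun i => |cf B i| / cf (stdSeries (b / 2)) i)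
          (fun i _ => hpos i) (mem_range.2 h)
      rw [div_le_iff₀ p2] at this
      nlinarith [mul_pos hε' p1]
    · have := hn₀ n h
      rw [norm_eq_abs, norm_of_nonneg p1.le] at this
      nlinarith [mul_nonneg hM0 p2.le]
  have hcM : cf (C (c * M) * stdSeries (a + b / 2)) =o[atTop] cf (stdSeries (a + b)) := by
    have := (cf_std_isLittleO (a := a + b / 2) (b := a + b) (by positivity)
      (by linarith)).const_mul_left (c * M)
    exact this.congr_left fun n => (cf_C_mul _ _ n).symm
  filter_upwards [isLittleO_iff.1 hcM (half_pos hε)] with n hn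
  have key := abs_cf_mul_le (A := A) (A' := C c * stdSeries a)
    (fun n => by rw [cf_C_mul]; exact hc n) hM n
  have e : C c * stdSeries a * (C (ε / (2 * c)) * stdSeries b + C M * stdSeries (b / 2)) =
      C (ε / 2) * stdSeries (a + b) + C (c * M) * stdSeries (a + b / 2) := by
    rw [stdSeries_add, stdSeries_add, show ε / 2 = c * (ε / (2 * c)) by field_simp, map_mul,
      map_mul]
    ring
  rw [e, cf_add, cf_C_mul] at key
  have hab := cf_std_pos (add_pos ha hb) n
  rw [norm_of_nonneg hab.le] at hn ⊢
  rw [norm_eq_abs]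
  have := (le_abs_self _).trans hn
  linarith

/-- Convolution is compatible with asymptotic equivalence to the standard sequences. -/
lemma isEquivalent_mul {A B : ℝ⟦X⟧} {a b : ℝ} (ha : 0 < a) (hb : 0 < b)
    (hA : cf A ~[atTop] cf (stdSeries a)) (hB : cf B ~[atTop] cf (stdSeries b)) :
    cf (A * B) ~[atTop] cf (stdSeries (a + b)) := by
  have h1 : cf (A * (B - stdSeries b)) =o[atTop] cf (stdSeries (a + b)) :=
    isLittleO_mul ha hb hA.isBigO
      (hB.isLittleO.congr_left fun n => (cf_sub _ _ n).symm)
  have h2 : cf (stdSeries b * (A - stdSeries a)) =o[atTop] cf (stdSeries (b + a)) :=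
    isLittleO_mul hb ha (isBigO_refl _ _) (hA.isLittleO.congr_left fun n => (cf_sub _ _ n).symm)
  rw [add_comm b a] at h2
  refine (h1.add h2).congr_left fun n => ?_
  rw [← cf_add, Pi.sub_apply, ← cf_sub, stdSeries_add]
  congr 1
  ring

/-! ### The renewal sequence and its tail function -/

/-- The generating series `∑_{n ≥ 1} K(n) Xⁿ`; the irrelevant value `K 0` is discarded. -/
noncomputable def phi (K : ℕ → ℝ) : ℝ⟦X⟧ := PowerSeries.mk fun n => if n = 0 then 0 else K n

/-- The generating series of the renewal mass function `u_n = ∑_k P(S_k = n)` of the random walk `S`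
with step law `K`, namely `∑_k φ^k = (1 - φ)⁻¹`. -/
noncomputable def ren (K : ℕ → ℝ) : ℝ⟦X⟧ := (1 - phi K)⁻¹

/-- The generating series of `n ↦ 1 - ∑_{m ≤ n} K(m)`, which is the tail function
`∑_{m > n} K(m)` when `K` has total mass one. -/
noncomputable def tail (K : ℕ → ℝ) : ℝ⟦X⟧ := (1 - phi K) * stdSeries 1

lemma cf_phi_succ (K : ℕ → ℝ) (n : ℕ) : cf (phi K) (n + 1) = K (n + 1) := by simp [cf, phi]

lemma cf_phi_zero (K : ℕ → ℝ) : cf (phi K) 0 = 0 := by simp [cf, phi]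

lemma ren_mul (K : ℕ → ℝ) : ren K * (1 - phi K) = 1 :=
  PowerSeries.inv_mul_cancel _ (by
    have := cf_phi_zero K
    simp only [cf, coeff_zero_eq_constantCoeff] at this
    simp [this])

/-- Renewal identity: the convolution of the renewal mass function with the tail function is the
constant sequence `1`. -/
lemma ren_mul_tail (K : ℕ → ℝ) : ren K * tail K = stdSeries 1 := by
  rw [tail, ← mul_assoc, ren_mul, one_mul]

lemma cf_mul_std_one (A : ℝ⟦X⟧) (n : ℕ) :
    cf (A * stdSeries 1) n = ∑ k ∈ range (n + 1), cf A k := by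
  rw [cf_mul, Nat.sum_antidiagonal_eq_sum_range_succ_mk]
  simp [cf_std_one]

lemma cf_mul_nonneg {A B : ℝ⟦X⟧} (hA : ∀ n, 0 ≤ cf A n) (hB : ∀ n, 0 ≤ cf B n) (n : ℕ) :
    0 ≤ cf (A * B) n := by
  rw [cf_mul]
  exact sum_nonneg fun p _ => mul_nonneg (hA _) (hB _)

lemma phi_nonneg {K : ℕ → ℝ} (hpos : ∀ n, 1 ≤ n → 0 ≤ K n) (n : ℕ) : 0 ≤ cf (phi K) n := by
  cases n with
  | zero => rw [cf_phi_zero]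
  | succ n => rw [cf_phi_succ]; exact hpos _ (by omega)

lemma cf_one_zero : cf (1 : ℝ⟦X⟧) 0 = 1 := by simp [cf]

lemma ren_eq (K : ℕ → ℝ) : ren K = 1 + phi K * ren K := by
  linear_combination ren_mul K

lemma ren_zero (K : ℕ → ℝ) : cf (ren K) 0 = 1 := by
  rw [ren_eq, cf_add, cf_mul, cf_one_zero]
  simp [cf_phi_zero]

lemma ren_nonneg {K : ℕ → ℝ} (hpos : ∀ n, 1 ≤ n → 0 ≤ K n) (n : ℕ) : 0 ≤ cf (ren K) n := by
  induction n using Nat.strong_induction_on with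
  | _ n ih =>
    rw [ren_eq, cf_add, cf_mul]
    refine add_nonneg (by simp only [cf, coeff_one]; split_ifs <;> norm_num)
      (sum_nonneg fun p hp => ?_)
    rw [HasAntidiagonal.mem_antidiagonal] at hp
    rcases Nat.eq_zero_or_pos p.1 with h | h
    · simp [h, cf_phi_zero]
    · exact mul_nonneg (phi_nonneg hpos _) (ih _ (by omega))

lemma cf_tail (K : ℕ → ℝ) (n : ℕ) :
    cf (tail K) n = 1 - ∑ k ∈ range n, K (k + 1) := by
  rw [tail, cf_mul_std_one, sum_range_succ', cf_sub, cf_one_zero, cf_phi_zero]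
  have : ∀ k, cf (1 - phi K) (k + 1) = - K (k + 1) := fun k => by
    rw [cf_sub, cf_phi_succ]; simp [cf, coeff_one]
  simp only [this, sum_neg_distrib]
  ring

lemma tail_succ (K : ℕ → ℝ) (n : ℕ) :
    cf (tail K) n - cf (tail K) (n + 1) = K (n + 1) := by
  rw [cf_tail, cf_tail, sum_range_succ]; ring

lemma tail_tendsto {K : ℕ → ℝ} (hsum : HasSum (fun n : ℕ => K (n + 1)) 1) :
    Tendsto (cf (tail K)) atTop (𝓝 0) := by
  have := hsum.tendsto_sum_nat.const_sub 1
  rw [sub_self] at this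
  exact this.congr fun n => (cf_tail K n).symm

lemma tail_antitone {K : ℕ → ℝ} (hpos : ∀ n, 1 ≤ n → 0 ≤ K n) : Antitone (cf (tail K)) :=
  antitone_nat_of_succ_le fun n => by
    have := tail_succ K n
    have := hpos (n + 1) (by omega)
    linarith

/-- The standard sequence of exponent `1/2` is `n ↦ centralBinom n / 4 ^ n`, and these explicit
bounds follow from monotonicity in `n` of `d² (4n+1)` and `d² (n+1)`. -/
lemma std_half_bounds (n : ℕ) : 1 / (2 * √(n + 1 : ℝ)) ≤ cf (stdSeries (1 / 2)) n ∧
    cf (stdSeries (1 / 2)) n ≤ 1 / √(n + 1 : ℝ) := by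
  have key : 1 ≤ cf (stdSeries (1 / 2)) n ^ 2 * (4 * n + 1) ∧
      cf (stdSeries (1 / 2)) n ^ 2 * (n + 1) ≤ 1 := by
    induction n with
    | zero => simp [cf_std_zero]
    | succ n ih =>
      rw [cf_std_succ]
      have hd := cf_std_pos (a := 1 / 2) (by norm_num) n
      set d := cf (stdSeries (1 / 2)) n
      push_cast
      constructor
      · refine ih.1.trans ?_
        rw [mul_pow, mul_assoc]
        refine mul_le_mul_of_nonneg_left ?_ (by positivity)
        rw [div_pow, div_mul_eq_mul_div, le_div_iff₀ (by positivity)]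
        nlinarith [(Nat.cast_nonneg n : (0 : ℝ) ≤ n)]
      · refine le_trans ?_ ih.2
        rw [mul_pow, mul_assoc]
        refine mul_le_mul_of_nonneg_left ?_ (by positivity)
        rw [div_pow, div_mul_eq_mul_div, div_le_iff₀ (by positivity)]
        nlinarith [(Nat.cast_nonneg n : (0 : ℝ) ≤ n)]
  have hd := cf_std_pos (a := 1 / 2) (by norm_num) n
  set d := cf (stdSeries (1 / 2)) n
  have hs : 0 < √(n + 1 : ℝ) := by positivity
  have hs2 : √(n + 1 : ℝ) ^ 2 = n + 1 := sq_sqrt (by positivity)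
  constructor
  · rw [div_le_iff₀ (by positivity)]
    refine (one_le_sq_iff₀ (by positivity)).1 ?_
    have : (d * (2 * √(n + 1 : ℝ))) ^ 2 = d ^ 2 * (4 * (n + 1)) := by rw [mul_pow, mul_pow, hs2]; ring
    rw [this]
    nlinarith [key.1]
  · rw [le_div_iff₀ hs]
    refine (sq_le_one_iff₀ (by positivity)).1 ?_
    rw [mul_pow, hs2]
    exact key.2

lemma mul_K_tendsto {K : ℕ → ℝ}
    (htail : Tendsto (fun n : ℕ => (n : ℝ) ^ (3 / 2 : ℝ) * K n) atTop
      (𝓝 (1 / (2 * √π)))) :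
    Tendsto (fun n : ℕ => n * K n / cf (stdSeries (1 / 2)) n) atTop (𝓝 (1 / 2)) := by
  have hpi : 0 < √π := sqrt_pos.2 pi_pos
  have h := htail.div (cf_std_tendsto (a := 1 / 2) (by norm_num))
    (by rw [Gamma_one_half_eq]; positivity)
  rw [Gamma_one_half_eq, show 1 / (2 * √π) / (1 / √π) = 1 / 2 by field_simp] at h
  refine h.congr' ?_
  filter_upwards [eventually_ge_atTop 1] with n hn
  have hn' : (0 : ℝ) < n := by exact_mod_cast hn
  have e : (n : ℝ) ^ (3 / 2 : ℝ) = n * (n : ℝ) ^ (1 - 1 / 2 : ℝ) := by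
    rw [← rpow_one_add' hn'.le (by norm_num)]; norm_num
  have hd := cf_std_pos (a := 1 / 2) (by norm_num) n
  have : 0 < (n : ℝ) ^ (1 - 1 / 2 : ℝ) := by positivity
  rw [Pi.div_apply, e]
  field_simp

/-- A comparison of null sequences through their differences (Stolz–Cesàro, case `0/0`). -/
lemma le_of_diff_le {f : ℕ → ℝ} (hf : Tendsto f atTop (𝓝 0)) {n₀ : ℕ}
    (h : ∀ n, n₀ ≤ n → f (n + 1) ≤ f n) (n : ℕ) (hn : n₀ ≤ n) : 0 ≤ f n := by
  have h1 : Antitone fun k => f (n₀ + k) :=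
    antitone_nat_of_succ_le fun k => h (n₀ + k) (by omega)
  have h2 : Tendsto (fun k => f (n₀ + k)) atTop (𝓝 0) := by
    simpa only [add_comm] using (tendsto_add_atTop_iff_nat n₀).2 hf
  have := h1.le_of_tendsto h2 (n - n₀)
  simpa [Nat.add_sub_cancel' hn] using this

lemma std_half_tendsto : Tendsto (cf (stdSeries (1 / 2))) atTop (𝓝 0) := by
  have := cf_std_isLittleO (a := 1 / 2) (b := 1) (by norm_num) (by norm_num)
  rw [show cf (stdSeries 1) = fun _ => (1 : ℝ) from funext cf_std_one] at this
  exact (isLittleO_one_iff ℝ).1 this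

/-- Summation of the tail hypothesis: the increments of `tail K` and of the standard sequence of
exponent `1/2` have ratio tending to `1`, hence so have the sequences. -/
lemma tail_isEquivalent {K : ℕ → ℝ} (hsum : HasSum (fun n : ℕ => K (n + 1)) 1)
    (htail : Tendsto (fun n : ℕ => (n : ℝ) ^ (3 / 2 : ℝ) * K n) atTop
      (𝓝 (1 / (2 * √π)))) :
    cf (tail K) ~[atTop] cf (stdSeries (1 / 2)) := by
  set d := cf (stdSeries (1 / 2)) with hd
  have hdpos : ∀ n, 0 < d n := fun n => cf_std_pos (by norm_num) n
  have h1 : Tendsto (fun n : ℕ => n * K n / d n * (2 - 1 / (n : ℝ))) atTop (𝓝 1) := by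
    have := (mul_K_tendsto htail).mul ((tendsto_one_div_atTop_nhds_zero_nat (𝕜 := ℝ)).const_sub 2)
    rwa [sub_zero, show (1 / 2 : ℝ) * 2 = 1 by norm_num] at this
  have h2 := (tendsto_add_atTop_iff_nat 1).2 h1
  have hdiff : ∀ n : ℕ, d n - d (n + 1) = d (n + 1) / (2 * n + 1) := fun n => by
    rw [hd, cf_std_succ]
    have : (n : ℝ) + 1 ≠ 0 := by positivity
    have : 2 * (n : ℝ) + 1 ≠ 0 := by positivity
    field_simp
    ring
  have h3 : ∀ n : ℕ, ((n + 1 : ℕ) : ℝ) * K (n + 1) / d (n + 1) * (2 - 1 / ((n + 1 : ℕ) : ℝ)) =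
      K (n + 1) / (d n - d (n + 1)) := fun n => by
    rw [hdiff]
    have := hdpos (n + 1)
    push_cast
    field_simp
    ring
  simp only [h3] at h2
  rw [IsEquivalent, isLittleO_iff]
  intro ε hε
  obtain ⟨n₀, hn₀⟩ := eventually_atTop.1 (Metric.tendsto_nhds.1 h2 ε hε)
  have hK : ∀ n, n₀ ≤ n → |K (n + 1) - (d n - d (n + 1))| ≤ ε * (d n - d (n + 1)) := by
    intro n hn
    have h := (hn₀ n hn).le
    have hp : 0 < d n - d (n + 1) := by rw [hdiff]; have := hdpos (n + 1); positivity
    rw [Real.dist_eq, div_sub_one hp.ne', abs_div, abs_of_pos hp, div_le_iff₀ hp] at h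
    exact h
  have hp0 := tail_tendsto hsum
  have hd0 : Tendsto d atTop (𝓝 0) := std_half_tendsto
  filter_upwards [eventually_ge_atTop n₀] with n hn
  rw [norm_of_nonneg (hdpos n).le, Pi.sub_apply, norm_eq_abs, abs_le]
  constructor
  · have := le_of_diff_le (f := fun n => cf (tail K) n - (1 - ε) * d n)
      (by simpa using hp0.sub (hd0.const_mul (1 - ε))) (n₀ := n₀) (fun k hk => by
        have := (abs_le.1 (hK k hk)).1
        have := tail_succ K k
        linarith) n hn
    linarith
  · have := le_of_diff_le (f := fun n => (1 + ε) * d n - cf (tail K) n)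
      (by simpa using (hd0.const_mul (1 + ε)).sub hp0) (n₀ := n₀) (fun k hk => by
        have := (abs_le.1 (hK k hk)).2
        have := tail_succ K k
        linarith) n hn
    linarith

lemma tail_pos {K : ℕ → ℝ} (hpos : ∀ n, 1 ≤ n → 0 ≤ K n)
    (hsum : HasSum (fun n : ℕ => K (n + 1)) 1)
    (htail : Tendsto (fun n : ℕ => (n : ℝ) ^ (3 / 2 : ℝ) * K n) atTop
      (𝓝 (1 / (2 * √π)))) (n : ℕ) : 0 < cf (tail K) n := by
  have := (tail_isEquivalent hsum htail).eventually_pos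
    (Eventually.of_forall fun n => cf_std_pos (by norm_num) n)
  obtain ⟨m, hm, hnm⟩ := (this.and (eventually_ge_atTop n)).exists
  exact hm.trans_le (tail_antitone hpos hnm)

/-- As the tail function `p` decreases, `(∑_{k ≤ n} u_k) p_n ≤ ∑_{k ≤ n} u_k p_{n-k} = 1`. -/
lemma ren_sum_le {K : ℕ → ℝ} (hpos : ∀ n, 1 ≤ n → 0 ≤ K n)
    (hsum : HasSum (fun n : ℕ => K (n + 1)) 1)
    (htail : Tendsto (fun n : ℕ => (n : ℝ) ^ (3 / 2 : ℝ) * K n) atTop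
      (𝓝 (1 / (2 * √π)))) :
    ∃ C, 0 < C ∧ ∀ n : ℕ, cf (ren K * stdSeries 1) n ≤ C * √(n + 1 : ℝ) := by
  have hp := tail_pos hpos hsum htail
  obtain ⟨C, hC⟩ := (isBigO_nat_atTop_iff (f := cf (stdSeries (1 / 2)))
    (fun n hn => absurd hn (hp n).ne')).1 (tail_isEquivalent hsum htail).isBigO_symm
  have hC' : ∀ n : ℕ, 1 ≤ 2 * √(n + 1 : ℝ) * C * cf (tail K) n := fun n => by
    have h := hC n
    have hd := cf_std_pos (a := 1 / 2) (by norm_num) n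
    have := (std_half_bounds n).1
    have hs : 0 < √(n + 1 : ℝ) := by positivity
    rw [norm_of_nonneg hd.le, norm_of_nonneg (hp n).le] at h
    rw [div_le_iff₀ (by positivity)] at this
    nlinarith
  have hC0 : 0 < C := by
    by_contra! hneg
    have h := hC' 0
    have := hp 0
    have hs : 0 < √((0 : ℕ) + 1 : ℝ) := by positivity
    have : 2 * √((0 : ℕ) + 1 : ℝ) * C * cf (tail K) 0 ≤ 0 :=
      mul_nonpos_of_nonpos_of_nonneg (mul_nonpos_of_nonneg_of_nonpos (by positivity) hneg) this.le
    linarith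
  refine ⟨2 * C, by positivity, fun n => ?_⟩
  have h1 : cf (ren K * stdSeries 1) n * cf (tail K) n ≤ 1 := by
    have h0 : cf (ren K * tail K) n = 1 := by rw [ren_mul_tail, cf_std_one]
    refine le_of_le_of_eq ?_ h0
    rw [cf_mul, cf_mul, sum_mul]
    refine sum_le_sum fun p hp' => ?_
    rw [cf_std_one, mul_one]
    rw [HasAntidiagonal.mem_antidiagonal] at hp'
    exact mul_le_mul_of_nonneg_left (tail_antitone hpos (by omega)) (ren_nonneg hpos _)
  have h2 := hC' n
  have := hp n
  by_contra! hlt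
  have := mul_lt_mul_of_pos_right hlt this
  linarith

/-! ### The strong renewal theorem -/

lemma sum_inv_sqrt_le (T : ℕ) : ∑ m ∈ range T, 1 / √(m + 1 : ℝ) ≤ 2 * √(T : ℝ) := by
  induction T with
  | zero => simp
  | succ T ih =>
    rw [sum_range_succ]
    push_cast
    have hs : 0 < √(T + 1 : ℝ) := by positivity
    have h1 : √(T + 1 : ℝ) ^ 2 = T + 1 := sq_sqrt (by positivity)
    have h2 : √(T : ℝ) ^ 2 = T := sq_sqrt (by positivity)
    have h3 : 0 ≤ √(T : ℝ) := sqrt_nonneg _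
    have : 1 / √(T + 1 : ℝ) ≤ 2 * (√(T + 1 : ℝ) - √(T : ℝ)) := by
      rw [div_le_iff₀ hs]
      nlinarith [sq_nonneg (√(T + 1 : ℝ) - √(T : ℝ))]
    linarith

/-- In each product `u_k u_{n-k}` one index is at least `n/2`, where `u` is at most
`2 M / √(n+1)`; the other factor is summed. -/
lemma sq_le_of_local_bound {U : ℝ⟦X⟧} (hU : ∀ n, 0 ≤ cf U n) {C M : ℝ} (hM : 0 ≤ M)
    {n : ℕ} (hS : cf (U * stdSeries 1) n ≤ C * √(n + 1 : ℝ))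
    (h : ∀ k ≤ n, cf U k * √(k + 1 : ℝ) ≤ M) : cf (U * U) n ≤ 4 * C * M := by
  have hs : 0 < √(n + 1 : ℝ) := by positivity
  have hbig : ∀ k ≤ n, n ≤ 2 * k → cf U k ≤ 2 * M / √(n + 1 : ℝ) := by
    intro k hk hk2
    rw [le_div_iff₀ hs]
    have h1 : √(n + 1 : ℝ) ≤ 2 * √(k + 1 : ℝ) := by
      rw [show (2 : ℝ) * √(k + 1 : ℝ) = √(2 ^ 2 * (k + 1 : ℝ)) by
        rw [sqrt_mul (by norm_num), sqrt_sq (by norm_num)]]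
      refine sqrt_le_sqrt ?_
      have : (n : ℝ) ≤ 2 * k := by exact_mod_cast hk2
      have : (0 : ℝ) ≤ k := by positivity
      linarith
    nlinarith [h k hk, hU k]
  have hterm : ∀ p ∈ antidiagonal n, cf U p.1 * cf U p.2 ≤
      2 * M / √(n + 1 : ℝ) * (cf U p.1 + cf U p.2) := by
    intro p hp
    rw [HasAntidiagonal.mem_antidiagonal] at hp
    have h1 := hU p.1
    have h2 := hU p.2
    have h0 : 0 ≤ 2 * M / √(n + 1 : ℝ) := by positivity
    rcases le_total p.1 p.2 with hle | hle
    · have := hbig p.2 (by omega) (by omega)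
      nlinarith [mul_nonneg h0 h2]
    · have := hbig p.1 (by omega) (by omega)
      nlinarith [mul_nonneg h0 h1]
  rw [cf_mul]
  refine (sum_le_sum hterm).trans ?_
  rw [← mul_sum, sum_add_distrib]
  have e1 : ∑ p ∈ antidiagonal n, cf U p.1 = cf (U * stdSeries 1) n := by
    rw [cf_mul]; simp [cf_std_one]
  have e2 : ∑ p ∈ antidiagonal n, cf U p.2 = cf (U * stdSeries 1) n := by
    rw [mul_comm, cf_mul]; simp [cf_std_one]
  rw [e1, e2, div_mul_eq_mul_div, div_le_iff₀ hs]
  nlinarith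

/-- The a priori bound `u_n = O(n^{-1/2})`. In `n u_n = ∑_m B_m w_{n-m}` with `w = u * u`, the
terms with `m < ε n` contribute a small multiple of `max_{k ≤ n} √(k+1) u_k` (because `w` is
bounded by a multiple of this maximum), while the other terms are controlled by
`∑_{l ≤ n} w_l ≤ (∑_{l ≤ n} u_l)²`. For small `ε` the maximum is thus bounded. -/
lemma bootstrap {U B : ℝ⟦X⟧} (hU : ∀ n, 0 ≤ cf U n)
    (hBU : ∀ n : ℕ, n * cf U n = cf (B * (U * U)) n) {C D : ℝ} (hC : 0 < C) (hD : 0 < D)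
    (hS : ∀ n : ℕ, cf (U * stdSeries 1) n ≤ C * √(n + 1 : ℝ))
    (hBD : ∀ m : ℕ, cf B m ≤ D * (1 / √(m + 1 : ℝ))) :
    ∃ M, 0 < M ∧ ∀ n : ℕ, cf U n * √(n + 1 : ℝ) ≤ M := by
  -- this `ε` gives the terms with `m < ε (n + 1)` the total weight `√(n + 1) M / 4`
  set ε : ℝ := 1 / (32 * C * D) ^ 2 with hε
  have hεpos : 0 < ε := by positivity
  have hsε : √ε = 1 / (32 * C * D) := by
    rw [hε, one_div, sqrt_inv, sqrt_sq (by positivity), one_div]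
  have hstep : ∀ (n : ℕ) (M : ℝ), 1 ≤ n → 0 ≤ M → (∀ k ≤ n, cf U k * √(k + 1 : ℝ) ≤ M) →
      cf U n * √(n + 1 : ℝ) ≤ M / 2 + 2 * D * C ^ 2 / √ε := by
    intro n M hn hM hk
    have hs : 0 < √(n + 1 : ℝ) := by positivity
    have hs2 : √(n + 1 : ℝ) ^ 2 = n + 1 := sq_sqrt (by positivity)
    have hW : ∀ l ≤ n, cf (U * U) l ≤ 4 * C * M := fun l hl =>
      sq_le_of_local_bound hU hM (hS l) fun k hkl => hk k (hkl.trans hl)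
    have hWsum : ∑ p ∈ antidiagonal n, cf (U * U) p.2 ≤ C ^ 2 * (n + 1) := by
      have e : ∑ p ∈ antidiagonal n, cf (U * U) p.2 = cf (U * (U * stdSeries 1)) n := by
        rw [← mul_assoc, mul_comm (U * U), cf_mul]
        simp [cf_std_one]
      rw [e, cf_mul]
      have : ∀ p ∈ antidiagonal n, cf U p.1 * cf (U * stdSeries 1) p.2 ≤
          cf U p.1 * (C * √(n + 1 : ℝ)) := fun p hp => by
        rw [HasAntidiagonal.mem_antidiagonal] at hp
        refine mul_le_mul_of_nonneg_left ((hS _).trans ?_) (hU _)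
        have : (p.2 : ℝ) ≤ n := by exact_mod_cast (show p.2 ≤ n by omega)
        gcongr
      refine (sum_le_sum this).trans ?_
      rw [← sum_mul]
      have e1 : ∑ p ∈ antidiagonal n, cf U p.1 = cf (U * stdSeries 1) n := by
        rw [cf_mul]; simp [cf_std_one]
      rw [e1]
      have := hS n
      nlinarith [mul_pos hC hs]
    set T : ℕ := ⌊ε * (n + 1)⌋₊ with hT
    have hTle : (T : ℝ) ≤ ε * (n + 1) := Nat.floor_le (by positivity)
    have hTlt : ε * (n + 1) < T + 1 := Nat.lt_floor_add_one _
    have hterm : ∀ p ∈ antidiagonal n, cf B p.1 * cf (U * U) p.2 ≤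
        (if p.1 < T then D * (1 / √(p.1 + 1 : ℝ)) * (4 * C * M) else 0) +
          D / (√ε * √(n + 1 : ℝ)) * cf (U * U) p.2 := by
      intro p hp
      rw [HasAntidiagonal.mem_antidiagonal] at hp
      have hw := cf_mul_nonneg hU hU p.2
      split_ifs with hlt
      · have h1 : cf B p.1 * cf (U * U) p.2 ≤ D * (1 / √(p.1 + 1 : ℝ)) * (4 * C * M) :=
          mul_le_mul (hBD _) (hW _ (by omega)) hw (by positivity)
        have h2 : 0 ≤ D / (√ε * √(n + 1 : ℝ)) * cf (U * U) p.2 := by positivity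
        linarith
      · rw [zero_add]
        refine mul_le_mul_of_nonneg_right ((hBD _).trans ?_) hw
        rw [mul_one_div]
        have : (T : ℝ) ≤ p.1 := by exact_mod_cast not_lt.1 hlt
        rw [← sqrt_mul hεpos.le]
        gcongr
        linarith
    have hsum : ∑ p ∈ antidiagonal n,
        (if p.1 < T then D * (1 / √(p.1 + 1 : ℝ)) * (4 * C * M) else 0) ≤
          D * (2 * (√ε * √(n + 1 : ℝ))) * (4 * C * M) := by
      rw [Nat.sum_antidiagonal_eq_sum_range_succ_mk, ← sum_filter, ← sum_mul, ← mul_sum]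
      refine mul_le_mul_of_nonneg_right (mul_le_mul_of_nonneg_left ?_ hD.le) (by positivity)
      calc ∑ m ∈ range n.succ with m < T, 1 / √(m + 1 : ℝ)
          ≤ ∑ m ∈ range T, 1 / √(m + 1 : ℝ) :=
            sum_le_sum_of_subset_of_nonneg
              (fun m hm => mem_range.2 (mem_filter.1 hm).2) (fun _ _ _ => by positivity)
        _ ≤ 2 * √(T : ℝ) := sum_inv_sqrt_le T
        _ ≤ 2 * (√ε * √(n + 1 : ℝ)) := by
            rw [← sqrt_mul hεpos.le]
            gcongr
    have hmain : n * cf U n ≤ D * (2 * (√ε * √(n + 1 : ℝ))) * (4 * C * M) +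
        D / (√ε * √(n + 1 : ℝ)) * (C ^ 2 * (n + 1)) := by
      rw [hBU, cf_mul]
      refine (sum_le_sum hterm).trans ?_
      rw [sum_add_distrib, ← mul_sum]
      refine add_le_add hsum (mul_le_mul_of_nonneg_left hWsum (by positivity))
    have e1 : D * (2 * (√ε * √(n + 1 : ℝ))) * (4 * C * M) = √(n + 1 : ℝ) * (M / 4) := by
      rw [hsε]; field_simp; norm_num
    have e2 : D / (√ε * √(n + 1 : ℝ)) * (C ^ 2 * (n + 1)) =
        √(n + 1 : ℝ) * (D * C ^ 2 / √ε) := by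
      field_simp
      rw [hs2]
    rw [e1, e2] at hmain
    have hn1 : (1 : ℝ) ≤ n := by exact_mod_cast hn
    have h5 : (n + 1) * cf U n ≤ 2 * (n * cf U n) := by nlinarith [hU n]
    have h6 : √(n + 1 : ℝ) * (cf U n * √(n + 1 : ℝ)) ≤
        √(n + 1 : ℝ) * (M / 2 + 2 * D * C ^ 2 / √ε) := by
      calc √(n + 1 : ℝ) * (cf U n * √(n + 1 : ℝ)) = (√(n + 1 : ℝ) ^ 2) * cf U n := by ring
        _ ≤ 2 * (√(n + 1 : ℝ) * (M / 4) + √(n + 1 : ℝ) * (D * C ^ 2 / √ε)) := by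
            rw [hs2]; linarith
        _ = _ := by ring
    exact le_of_mul_le_mul_left h6 hs
  refine ⟨cf U 0 + 4 * D * C ^ 2 / √ε + 1, by have := hU 0; positivity, fun n => ?_⟩
  -- The maximum over `k ≤ n` is attained at some `m`, where `hstep` bounds it by half of itself.
  obtain ⟨m, hm, hmax⟩ := exists_max_image (range (n + 1)) (fun k => cf U k * √(k + 1 : ℝ))
    ⟨0, by simp⟩
  rw [mem_range] at hm
  have hnm := hmax n (by simp)
  have hA : 0 ≤ D * C ^ 2 / √ε := by positivity
  have hA4 : 4 * D * C ^ 2 / √ε = 4 * (D * C ^ 2 / √ε) := by ring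
  have hA2 : 2 * D * C ^ 2 / √ε = 2 * (D * C ^ 2 / √ε) := by ring
  have hU0 := hU 0
  rcases Nat.eq_zero_or_pos m with rfl | hmpos
  · simp only [Nat.cast_zero, zero_add, sqrt_one, mul_one] at hnm
    linarith
  · have := hstep m _ hmpos (mul_nonneg (hU m) (sqrt_nonneg _))
      fun k hk => hmax k (mem_range.2 (by omega))
    linarith

lemma cf_X_derivative (A : ℝ⟦X⟧) (n : ℕ) : cf (X * d⁄dX ℝ A) n = n * cf A n := by
  cases n with
  | zero => simp [cf]
  | succ n => simp [cf, coeff_succ_X_mul, coeff_derivative, mul_comm]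

/-- `n u_n = ∑_m (m K(m)) w_{n-m}` with `w = u * u`, from differentiating `u (1 - φ) = 1`. -/
lemma ren_derivative (K : ℕ → ℝ) (n : ℕ) :
    n * cf (ren K) n = cf (X * d⁄dX ℝ (phi K) * (ren K * ren K)) n := by
  have h := congrArg (d⁄dX ℝ) (ren_mul K)
  rw [Derivation.leibniz] at h
  simp only [map_sub, Derivation.map_one_eq_zero, zero_sub, smul_eq_mul] at h
  have : d⁄dX ℝ (ren K) = d⁄dX ℝ (phi K) * (ren K * ren K) := by
    linear_combination ren K * h - d⁄dX ℝ (ren K) * ren_mul K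
  rw [← cf_X_derivative, this, mul_assoc]

lemma K_tendsto {K : ℕ → ℝ}
    (htail : Tendsto (fun n : ℕ => (n : ℝ) ^ (3 / 2 : ℝ) * K n) atTop
      (𝓝 (1 / (2 * √π)))) :
    Tendsto (fun n : ℕ => cf (X * d⁄dX ℝ (phi K)) n / cf (stdSeries (1 / 2)) n)
      atTop (𝓝 (1 / 2)) := by
  refine (mul_K_tendsto htail).congr fun n => ?_
  rw [cf_X_derivative]
  cases n with
  | zero => simp
  | succ n => rw [cf_phi_succ]

lemma ren_bound {K : ℕ → ℝ} (hpos : ∀ n, 1 ≤ n → 0 ≤ K n)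
    (hsum : HasSum (fun n : ℕ => K (n + 1)) 1)
    (htail : Tendsto (fun n : ℕ => (n : ℝ) ^ (3 / 2 : ℝ) * K n) atTop
      (𝓝 (1 / (2 * √π)))) :
    ∃ M, 0 < M ∧ ∀ n : ℕ, cf (ren K) n * √(n + 1 : ℝ) ≤ M := by
  obtain ⟨C, hC, hS⟩ := ren_sum_le hpos hsum htail
  have hO : cf (X * d⁄dX ℝ (phi K)) =O[atTop] cf (stdSeries (1 / 2)) :=
    isBigO_of_div_tendsto_nhds
      (Eventually.of_forall fun n hn => absurd hn (cf_std_pos (by norm_num) n).ne') _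
      (K_tendsto htail)
  obtain ⟨D, hD, hDb⟩ := exists_bound (by norm_num) hO
  refine bootstrap (ren_nonneg hpos) (ren_derivative K) hC hD hS fun m => ?_
  refine (le_abs_self _).trans ((hDb m).trans ?_)
  exact mul_le_mul_of_nonneg_left (std_half_bounds m).2 hD.le

lemma ren_isBigO {K : ℕ → ℝ} (hpos : ∀ n, 1 ≤ n → 0 ≤ K n)
    (hsum : HasSum (fun n : ℕ => K (n + 1)) 1)
    (htail : Tendsto (fun n : ℕ => (n : ℝ) ^ (3 / 2 : ℝ) * K n) atTop
      (𝓝 (1 / (2 * √π)))) :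
    cf (ren K) =O[atTop] cf (stdSeries (1 / 2)) := by
  obtain ⟨M, hM, h⟩ := ren_bound hpos hsum htail
  refine isBigO_of_bound (C := 2 * M) fun n => ?_
  have hs : 0 < √(n + 1 : ℝ) := by positivity
  have h1 := (std_half_bounds n).1
  have h2 := h n
  rw [← le_div_iff₀ hs] at h2
  rw [abs_of_nonneg (ren_nonneg hpos n)]
  refine h2.trans ?_
  calc M / √(n + 1 : ℝ) = 2 * M * (1 / (2 * √(n + 1 : ℝ))) := by field_simp
    _ ≤ _ := by gcongr

/-- The strong renewal theorem. With `p` the tail function and `𝟙` the constant sequence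
`1`, the relations `u * p = 𝟙` and `p * p ~ 𝟙` give
`∑_{k ≤ n} u_k = (u * 𝟙)_n ~ (u * p * p)_n = (𝟙 * p)_n`, which is
asymptotic to `stdSeries (3/2)`; since `m K(m) ~ p_m / 2`, replacing `m K(m)` by `p_m / 2` in the
identity for `n u_n` turns it into `(p * w)_n / 2 = ∑_{k ≤ n} u_k / 2` up to a smaller error, where
`w = u * u`. -/
lemma ren_isEquivalent {K : ℕ → ℝ} (hpos : ∀ n, 1 ≤ n → 0 ≤ K n)
    (hsum : HasSum (fun n : ℕ => K (n + 1)) 1)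
    (htail : Tendsto (fun n : ℕ => (n : ℝ) ^ (3 / 2 : ℝ) * K n) atTop
      (𝓝 (1 / (2 * √π)))) :
    cf (ren K) ~[atTop] cf (stdSeries (1 / 2)) := by
  have hu := ren_isBigO hpos hsum htail
  have hp := tail_isEquivalent hsum htail
  have hpos2 : (0 : ℝ) < 1 / 2 := by norm_num
  have hq : cf (tail K * tail K) ~[atTop] cf (stdSeries 1) := by
    simpa only [add_halves] using isEquivalent_mul hpos2 hpos2 hp hp
  have hw : cf (ren K * ren K) =O[atTop] cf (stdSeries 1) := by
    simpa only [add_halves] using isBigO_mul hpos2 hpos2 hu hu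
  have e32 : (1 / 2 : ℝ) + 1 = 3 / 2 := by norm_num
  have hS : cf (ren K * stdSeries 1) ~[atTop] cf (stdSeries (3 / 2)) := by
    have h1 : cf (tail K * stdSeries 1) ~[atTop] cf (stdSeries (3 / 2)) := by
      simpa only [e32] using isEquivalent_mul hpos2 one_pos hp IsEquivalent.refl
    have h2 : cf (ren K * (tail K * tail K - stdSeries 1)) =o[atTop] cf (stdSeries (3 / 2)) := by
      simpa only [e32] using isLittleO_mul hpos2 one_pos hu
        (hq.isLittleO.congr_left fun n => (cf_sub _ _ n).symm)
    refine (h1.sub_isLittleO h2).congr_left (Eventually.of_forall fun n => ?_)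
    rw [Pi.sub_apply, ← cf_sub]
    congr 1
    linear_combination (- tail K) * ren_mul_tail K
  set b := X * d⁄dX ℝ (phi K) with hb
  have hbp : cf (b - C (1 / 2) * tail K) =o[atTop] cf (stdSeries (1 / 2)) := by
    rw [isLittleO_iff_tendsto fun n hn => absurd hn (cf_std_pos hpos2 n).ne']
    have h1 := (isEquivalent_iff_tendsto_one
      (Eventually.of_forall fun n => (cf_std_pos hpos2 n).ne')).1 hp
    have h2 := (K_tendsto htail).sub (h1.const_mul (1 / 2))
    rw [mul_one, sub_self] at h2
    refine h2.congr fun n => ?_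
    rw [cf_sub, cf_C_mul, Pi.div_apply]
    ring
  have hdiff : cf (ren K * ren K * (b - C (1 / 2) * tail K)) =o[atTop] cf (stdSeries (3 / 2)) := by
    have := isLittleO_mul one_pos hpos2 hw hbp
    rwa [add_comm, e32] at this
  have hnu : (fun n : ℕ => 2 * (n * cf (ren K) n)) ~[atTop] cf (stdSeries (3 / 2)) := by
    refine (hS.add_isLittleO (hdiff.const_mul_left 2)).congr_left (Eventually.of_forall fun n => ?_)
    show _ = 2 * (n * cf (ren K) n)
    rw [Pi.add_apply, ren_derivative, ← hb, ← cf_C_mul, ← cf_C_mul, ← cf_add]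
    congr 1
    have : (C (2 : ℝ) : ℝ⟦X⟧) * C (1 / 2) = 1 := by rw [← map_mul]; norm_num
    linear_combination (-ren K) * ren_mul_tail K - ren K * ren K * tail K * this
  have hd32 : ∀ n, cf (stdSeries (3 / 2)) n = (2 * n + 1) * cf (stdSeries (1 / 2)) n := by
    intro n
    induction n with
    | zero => simp [cf_std_zero]
    | succ n ih =>
      rw [cf_std_succ, ih, cf_std_succ]
      push_cast
      field_simp
      ring
  refine isEquivalent_of_tendsto_one ?_
  have h1 := (isEquivalent_iff_tendsto_one
    (Eventually.of_forall fun n => (cf_std_pos (by norm_num : (0 : ℝ) < 3 / 2) n).ne')).1 hnu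
  have h2 : Tendsto (fun n : ℕ => 1 + 1 / (2 : ℝ) * (1 / (n : ℝ))) atTop (𝓝 1) := by
    simpa only [mul_zero, add_zero] using
      ((tendsto_one_div_atTop_nhds_zero_nat (𝕜 := ℝ)).const_mul (1 / 2)).const_add 1
  have h3 := h1.mul h2
  rw [mul_one] at h3
  refine h3.congr' ?_
  filter_upwards [eventually_ge_atTop 1] with n hn
  have hn' : (0 : ℝ) < n := by exact_mod_cast hn
  have := cf_std_pos hpos2 n
  rw [Pi.div_apply, Pi.div_apply, hd32]
  field_simp
/-! ### Convolution powers of the renewal mass function -/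

lemma pow_nonneg_cf {U : ℝ⟦X⟧} (hU : ∀ n, 0 ≤ cf U n) (j n : ℕ) : 0 ≤ cf (U ^ j) n := by
  induction j generalizing n with
  | zero => simp only [pow_zero, cf, coeff_one]; split_ifs <;> norm_num
  | succ j ih => rw [pow_succ]; exact cf_mul_nonneg ih hU n

lemma pow_isEquivalent {U : ℝ⟦X⟧} (hU : cf U ~[atTop] cf (stdSeries (1 / 2))) (j : ℕ) :
    cf (U ^ (j + 1)) ~[atTop] cf (stdSeries ((j + 1) / 2)) := by
  induction j with
  | zero => simpa using hU
  | succ j ih =>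
    have h := isEquivalent_mul (by positivity) (by norm_num) ih hU
    rw [← pow_succ] at h
    convert h using 3
    push_cast
    ring

lemma pow_tendsto {U : ℝ⟦X⟧} (hU : cf U ~[atTop] cf (stdSeries (1 / 2))) (j : ℕ) :
    Tendsto (fun N : ℕ => √(N : ℝ) / √(N : ℝ) ^ j * cf (U ^ (j + 1)) N) atTop
      (𝓝 (1 / Gamma ((j + 1) / 2))) := by
  have h1 := cf_std_tendsto (a := ((j : ℝ) + 1) / 2) (by positivity)
  have h2 := ((pow_isEquivalent hU j).mul
    (IsEquivalent.refl (u := fun n : ℕ => (n : ℝ) ^ (1 - ((j : ℝ) + 1) / 2)))).symm.tendsto_nhds h1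
  refine h2.congr' ?_
  filter_upwards [eventually_ge_atTop 1] with n hn
  have hn0 : (0 : ℝ) < n := by exact_mod_cast hn
  rw [Pi.mul_apply, mul_comm]
  congr 1
  rw [sqrt_eq_rpow, ← rpow_mul_natCast hn0.le, ← rpow_sub hn0]
  congr 1
  ring

lemma sum_mul_le {A B : ℝ⟦X⟧} (hA : ∀ n, 0 ≤ cf A n) (hB : ∀ n, 0 ≤ cf B n) {r : ℝ}
    (hr : 0 ≤ r) (n : ℕ) :
    ∑ k ∈ range n, cf (A * B) k * r ^ k ≤
      (∑ k ∈ range n, cf A k * r ^ k) * ∑ k ∈ range n, cf B k * r ^ k := by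
  have h1 : ∀ k, cf (A * B) k * r ^ k =
      ∑ i ∈ range (k + 1), (cf A i * r ^ i) * (cf B (k - i) * r ^ (k - i)) := fun k => by
    rw [cf_mul, Nat.sum_antidiagonal_eq_sum_range_succ_mk, sum_mul]
    refine sum_congr rfl fun i hi => ?_
    have hi : i ≤ k := by simpa [Nat.lt_succ_iff] using hi
    rw [← Nat.add_sub_cancel' hi, pow_add]
    simp only [Nat.add_sub_cancel_left]
    ring
  simp only [h1]
  rw [sum_range_diag_flip n (fun i l => (cf A i * r ^ i) * (cf B l * r ^ l)), sum_mul]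
  refine sum_le_sum fun i _ => ?_
  rw [← mul_sum]
  refine mul_le_mul_of_nonneg_left ?_ (mul_nonneg (hA _) (pow_nonneg hr _))
  exact sum_le_sum_of_subset_of_nonneg (range_mono (Nat.sub_le _ _))
    fun l _ _ => mul_nonneg (hB _) (pow_nonneg hr _)

lemma sum_pow_le {U : ℝ⟦X⟧} (hU : ∀ n, 0 ≤ cf U n) {r : ℝ} (hr : 0 ≤ r) (n j : ℕ) :
    ∑ k ∈ range (n + 1), cf (U ^ j) k * r ^ k ≤ (∑ k ∈ range (n + 1), cf U k * r ^ k) ^ j := by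
  induction j with
  | zero => simp [sum_range_succ', cf, coeff_one]
  | succ j ih =>
    rw [pow_succ, pow_succ]
    refine (sum_mul_le (pow_nonneg_cf hU j) hU hr _).trans
      (mul_le_mul_of_nonneg_right ih (sum_nonneg fun k _ => mul_nonneg (hU _) (pow_nonneg hr _)))

/-- The Laplace sum of `1/√(k+1)` with weight `r ^ k`, `r = T/(T+1)`, is of order `√T`: the terms
`k < T` are summed without their weight, the others as a geometric series. -/
lemma laplace_le (T n : ℕ) :
    ∑ k ∈ range n, 1 / √(k + 1 : ℝ) * ((T : ℝ) / (T + 1)) ^ k ≤ 3 * √(T + 1 : ℝ) := by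
  set r : ℝ := (T : ℝ) / (T + 1) with hr
  have hr0 : 0 ≤ r := by positivity
  have hr1 : r < 1 := by rw [hr, div_lt_one (by positivity)]; linarith
  have hT : 0 < √(T + 1 : ℝ) := by positivity
  have hterm : ∀ k : ℕ, 1 / √(k + 1 : ℝ) * r ^ k ≤
      (if k ∈ range T then 1 / √(k + 1 : ℝ) else 0) + 1 / √(T + 1 : ℝ) * r ^ k := by
    intro k
    split_ifs with hk
    · have : 1 / √(k + 1 : ℝ) * r ^ k ≤ 1 / √(k + 1 : ℝ) * 1 :=
        mul_le_mul_of_nonneg_left (pow_le_one₀ hr0 hr1.le) (by positivity)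
      have : 0 ≤ 1 / √(T + 1 : ℝ) * r ^ k := by positivity
      linarith
    · rw [zero_add]
      have hk : (T : ℝ) ≤ k := by exact_mod_cast (by simpa using hk)
      gcongr
  refine (sum_le_sum fun k _ => hterm k).trans ?_
  rw [sum_add_distrib, ← mul_sum]
  have h1 : ∑ k ∈ range n, (if k ∈ range T then 1 / √(k + 1 : ℝ) else 0) ≤ 2 * √(T : ℝ) := by
    rw [← sum_filter]
    refine le_trans (sum_le_sum_of_subset_of_nonneg (t := range T) ?_ ?_) (sum_inv_sqrt_le T)
    · intro k hk; exact (mem_filter.1 hk).2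
    · intros; positivity
  have h2 : ∑ k ∈ range n, r ^ k ≤ T + 1 := by
    have := (summable_geometric_of_lt_one hr0 hr1).sum_le_tsum (range n)
      (fun k _ => pow_nonneg hr0 k)
    rw [tsum_geometric_of_lt_one hr0 hr1] at this
    refine this.trans (le_of_eq ?_)
    rw [hr]; field_simp; ring
  have h3 : 1 / √(T + 1 : ℝ) * ∑ k ∈ range n, r ^ k ≤ √(T + 1 : ℝ) := by
    rw [one_div, inv_mul_le_iff₀ hT, mul_self_sqrt (by positivity)]
    exact h2
  have h4 : √(T : ℝ) ≤ √(T + 1 : ℝ) := sqrt_le_sqrt (by linarith)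
  linarith

/-- Geometric decay, uniformly in `N`, of the mass that the `j`-th convolution power puts on
`[0, N]`, in units of `(√N)^j`: an exponential tilt of rate `q/N` costs a factor depending on `q`
only and makes the tilted mass of `U` on `[0, N]` at most a multiple of `√(N/q)`. -/
lemma sum_pow_bound {U : ℝ⟦X⟧} (hU : ∀ n, 0 ≤ cf U n) {M : ℝ} (hM : 0 < M)
    (hUM : ∀ n : ℕ, cf U n * √(n + 1 : ℝ) ≤ M) {R : ℝ} (hR : 0 ≤ R) :
    ∃ C, 0 < C ∧ ∃ N₀ : ℕ, 1 ≤ N₀ ∧ ∀ N, N₀ ≤ N → ∀ j : ℕ,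
      (R / √(N : ℝ)) ^ j * ∑ k ∈ range (N + 1), cf (U ^ j) k ≤ C * (1 / 2) ^ j := by
  obtain ⟨q, hq⟩ := exists_nat_ge (72 * (R * M) ^ 2 + 1)
  have hq1 : (1 : ℝ) ≤ q := le_trans (by nlinarith [sq_nonneg (R * M)]) hq
  have hq1' : 1 ≤ q := by exact_mod_cast hq1
  refine ⟨exp (2 * q), exp_pos _, q, hq1', fun N hN j => ?_⟩
  set T := N / q with hT
  have hT1 : 1 ≤ T := (Nat.one_le_div_iff (by omega)).2 hN
  have hT1' : (1 : ℝ) ≤ T := by exact_mod_cast hT1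
  have hTN : (q : ℝ) * T ≤ N := by exact_mod_cast Nat.mul_div_le N q
  have hNT : (N : ℝ) ≤ q * (T + 1) := by
    have := Nat.lt_mul_div_succ N (show 0 < q by omega)
    exact_mod_cast this.le
  have hN0 : (0 : ℝ) < N := by exact_mod_cast (by omega : 0 < N)
  set r : ℝ := (T : ℝ) / (T + 1) with hr
  have hr0 : 0 < r := by positivity
  have hr1 : r ≤ 1 := by rw [hr, div_le_one (by positivity)]; linarith
  have hlap : ∑ k ∈ range (N + 1), cf U k * r ^ k ≤ M * (3 * √(T + 1 : ℝ)) := by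
    refine le_trans ?_ (mul_le_mul_of_nonneg_left (laplace_le T (N + 1)) hM.le)
    rw [mul_sum]
    refine sum_le_sum fun k _ => ?_
    rw [← mul_assoc, mul_one_div]
    refine mul_le_mul_of_nonneg_right ?_ (by positivity)
    rw [le_div_iff₀ (by positivity)]
    exact hUM k
  -- undoing the tilt
  have htilt : 1 ≤ exp (2 * q) * r ^ N := by
    have h1 : r⁻¹ ≤ exp (1 / T) := by
      have := add_one_le_exp (1 / (T : ℝ))
      refine le_trans (le_of_eq ?_) this
      rw [hr, inv_div]; field_simp; ring
    have h2 : (r⁻¹) ^ N ≤ exp (2 * q) := by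
      refine (pow_le_pow_left₀ (by positivity) h1 N).trans ?_
      rw [← exp_nat_mul]
      refine exp_le_exp.2 ?_
      rw [mul_one_div, div_le_iff₀ (by positivity)]
      nlinarith
    rw [inv_pow] at h2
    rwa [inv_le_iff_one_le_mul₀ (by positivity)] at h2
  have hstep : ∑ k ∈ range (N + 1), cf (U ^ j) k ≤
      exp (2 * q) * ∑ k ∈ range (N + 1), cf (U ^ j) k * r ^ k := by
    rw [mul_sum]
    refine sum_le_sum fun k hk => ?_
    have hk : k ≤ N := by simpa [Nat.lt_succ_iff] using hk
    have h1 : r ^ N ≤ r ^ k := pow_le_pow_of_le_one hr0.le hr1 hk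
    have h2 : 1 ≤ exp (2 * q) * r ^ k :=
      htilt.trans (mul_le_mul_of_nonneg_left h1 (exp_pos _).le)
    nlinarith [pow_nonneg_cf hU j k]
  have hsN : 0 < √(N : ℝ) := sqrt_pos.2 hN0
  have hbase : R / √(N : ℝ) * (M * (3 * √(T + 1 : ℝ))) ≤ 1 / 2 := by
    rw [div_mul_eq_mul_div, div_le_iff₀ hsN]
    refine abs_le_of_sq_le_sq' ?_ (by positivity) |>.2
    have e1 : (R * (M * (3 * √(T + 1 : ℝ)))) ^ 2 = 9 * (R * M) ^ 2 * (T + 1) := by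
      rw [mul_pow, mul_pow, mul_pow, sq_sqrt (by positivity)]; ring
    have e2 : (1 / 2 * √(N : ℝ)) ^ 2 = N / 4 := by
      rw [mul_pow, sq_sqrt hN0.le]; ring
    rw [e1, e2]
    have : 72 * (R * M) ^ 2 * T ≤ q * T :=
      mul_le_mul_of_nonneg_right (by linarith) (by linarith)
    nlinarith [sq_nonneg (R * M)]
  calc (R / √(N : ℝ)) ^ j * ∑ k ∈ range (N + 1), cf (U ^ j) k
      ≤ (R / √(N : ℝ)) ^ j * (exp (2 * q) * (M * (3 * √(T + 1 : ℝ))) ^ j) := by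
        refine mul_le_mul_of_nonneg_left (hstep.trans ?_) (by positivity)
        refine mul_le_mul_of_nonneg_left ((sum_pow_le hU hr0.le N j).trans ?_) (exp_pos _).le
        exact pow_le_pow_left₀
          (sum_nonneg fun k _ => mul_nonneg (hU k) (pow_nonneg hr0.le k)) hlap j
    _ = exp (2 * q) * (R / √(N : ℝ) * (M * (3 * √(T + 1 : ℝ)))) ^ j := by
        rw [mul_pow]; ring
    _ ≤ exp (2 * q) * (1 / 2) ^ j :=
        mul_le_mul_of_nonneg_left (pow_le_pow_left₀ (by positivity) hbase j) (exp_pos _).le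

/-- The dominating series for the expansion of `√N Z_N`. Two factors of `U ^ (j + 1)` are combined
into the bounded sequence `cf (U * U)`, so that only partial sums of `cf (U ^ (j - 1))` remain. -/
lemma term_bound {U : ℝ⟦X⟧} (hU : ∀ n, 0 ≤ cf U n) {M W : ℝ} (hM : 0 < M)
    (hUM : ∀ n : ℕ, cf U n * √(n + 1 : ℝ) ≤ M) (hW : ∀ n, cf (U * U) n ≤ W)
    {R : ℝ} (hR : 0 < R) :
    ∃ C, 0 < C ∧ ∃ N₀ : ℕ, 1 ≤ N₀ ∧ ∀ N, N₀ ≤ N → ∀ j : ℕ,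
      √(N : ℝ) * (R / √(N : ℝ)) ^ j * cf (U ^ (j + 1)) N ≤ C * (1 / 2) ^ j := by
  have hW0 : 0 ≤ W := (cf_mul_nonneg hU hU 0).trans (hW 0)
  obtain ⟨C, hC, N₀, hN₀, h⟩ := sum_pow_bound hU hM hUM hR.le
  refine ⟨M + 2 * R * W * C, by positivity, N₀, hN₀, fun N hN j => ?_⟩
  have hsN : 0 < √(N : ℝ) := sqrt_pos.2 (by exact_mod_cast (by omega : 0 < N))
  cases j with
  | zero =>
    have h1 : √(N : ℝ) ≤ √(N + 1 : ℝ) := sqrt_le_sqrt (by linarith)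
    have h2 : 0 ≤ 2 * R * W * C := by positivity
    simp only [pow_zero, mul_one, zero_add, pow_one]
    nlinarith [hUM N, hU N]
  | succ i =>
    have h1 : cf (U ^ (i + 1 + 1)) N ≤ W * ∑ k ∈ range (N + 1), cf (U ^ i) k := by
      rw [show U ^ (i + 1 + 1) = U ^ i * (U * U) by ring, cf_mul,
        Nat.sum_antidiagonal_eq_sum_range_succ_mk, mul_sum]
      refine sum_le_sum fun k _ => ?_
      rw [mul_comm W]
      exact mul_le_mul_of_nonneg_left (hW _) (pow_nonneg_cf hU i k)
    calc √(N : ℝ) * (R / √(N : ℝ)) ^ (i + 1) * cf (U ^ (i + 1 + 1)) N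
        = R * ((R / √(N : ℝ)) ^ i * cf (U ^ (i + 1 + 1)) N) := by
          rw [pow_succ]; field_simp
      _ ≤ R * ((R / √(N : ℝ)) ^ i * (W * ∑ k ∈ range (N + 1), cf (U ^ i) k)) := by gcongr
      _ = R * W * ((R / √(N : ℝ)) ^ i * ∑ k ∈ range (N + 1), cf (U ^ i) k) := by ring
      _ ≤ R * W * (C * (1 / 2) ^ i) :=
          mul_le_mul_of_nonneg_left (h N hN i) (by positivity)
      _ = 2 * R * W * C * (1 / 2) ^ (i + 1) := by ring
      _ ≤ (M + 2 * R * W * C) * (1 / 2) ^ (i + 1) := by gcongr; linarith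

/-! ### Expansion of the partition function in powers of `1 - e^{-h}` -/

lemma cf_pow (A : ℝ⟦X⟧) (k N : ℕ) :
    cf (A ^ k) N = ∑ ℓ ∈ Finset.Nat.antidiagonalTuple k N, ∏ i, cf A (ℓ i) := by
  have h := coeff_prod (fun _ : Fin k => A) N univ
  rw [prod_const, card_univ, Fintype.card_fin] at h
  rw [cf, h]
  refine sum_equiv Finsupp.equivFunOnFinite (fun l => ?_) (fun l _ => rfl)
  simp [Finset.Nat.mem_antidiagonalTuple]

lemma cf_phi_pow (K : ℕ → ℝ) (k N : ℕ) :
    cf (phi K ^ k) N = ∑ ℓ ∈ (Finset.Nat.antidiagonalTuple k N).filter (fun ℓ => ∀ i, 1 ≤ ℓ i),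
      ∏ i, K (ℓ i) := by
  rw [cf_pow, sum_filter]
  refine sum_congr rfl fun ℓ _ => ?_
  split_ifs with h
  · refine prod_congr rfl fun i _ => ?_
    have := h i
    rw [← Nat.sub_add_cancel this, cf_phi_succ]
  · push Not at h
    obtain ⟨i, hi⟩ := h
    refine prod_eq_zero (mem_univ i) ?_
    rw [Nat.lt_one_iff.1 hi, cf_phi_zero]

/-- A real power series with its coefficients read in `ℂ`. -/
noncomputable def cx (A : ℝ⟦X⟧) : ℂ⟦X⟧ := PowerSeries.map Complex.ofRealHom A

lemma coeff_cx_pow (A : ℝ⟦X⟧) (j n : ℕ) : coeff n (cx A ^ j) = (cf (A ^ j) n : ℂ) := by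
  rw [cx, ← map_pow, coeff_map]; rfl

lemma pinZ_eq (K : ℕ → ℝ) {N : ℕ} (hN : 1 ≤ N) (h : ℂ) :
    pinZ K N h = coeff N (∑ k ∈ range (N + 1), (C (Complex.exp h) * cx (phi K)) ^ k) := by
  have h0 : coeff N ((C (Complex.exp h) * cx (phi K)) ^ 0) = 0 := by
    rw [pow_zero, coeff_one, if_neg (by omega)]
  rw [map_sum, sum_range_succ', h0, add_zero, pinZ, range_eq_Ico,
    sum_Ico_add' (fun k => coeff N ((C (Complex.exp h) * cx (phi K)) ^ k)) 0 N 1]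
  refine sum_congr (by ext; simp) fun k _ => ?_
  rw [mul_pow, ← map_pow, coeff_C_mul, coeff_cx_pow, cf_phi_pow, Complex.exp_nat_mul]
  push_cast
  rfl

/-- With `v = 1 - e^{-h}`, one has `1 - e^h φ = e^h (1 - φ - v)` and `1 - φ = U⁻¹`; expanding the
inverses of both sides, `∑_k (e^h φ)^k = e^{-h} ∑_j v^j U^(j+1)`. Both expansions are truncated
below, and the remainders vanish at the coefficient of order `N`. -/
lemma pinZ_eq_tsum (K : ℕ → ℝ) {N : ℕ} (hN : 1 ≤ N) {h v : ℂ}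
    (hv : Complex.exp h * (1 - v) = 1)
    (hlim : ∀ k ≤ N, Tendsto (fun j => v ^ j * (cf (ren K ^ j) k : ℂ)) atTop (𝓝 0))
    (hs : Summable fun j => v ^ j * (cf (ren K ^ (j + 1)) N : ℂ)) :
    Complex.exp h * pinZ K N h = ∑' j, v ^ j * (cf (ren K ^ (j + 1)) N : ℂ) := by
  set e := Complex.exp h with he
  set φ := cx (phi K) with hφ
  set U := cx (ren K) with hU
  set H : ℂ⟦X⟧ := ∑ k ∈ range (N + 1), (C e * φ) ^ k with hH
  have hUφ : U * (1 - φ) = 1 := by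
    have := congrArg (PowerSeries.map Complex.ofRealHom) (ren_mul K)
    rwa [map_mul, map_sub, map_one] at this
  have hev : (C e : ℂ⟦X⟧) * (1 - C v) = 1 := by
    rw [← map_one (C (R := ℂ)), ← map_sub, ← map_mul, hv]
  have hkey : ∀ J, ∑ j ∈ range J, v ^ j * (cf (ren K ^ (j + 1)) N : ℂ) =
      e * pinZ K N h - e * ∑ p ∈ antidiagonal N, v ^ J * (cf (ren K ^ J) p.1 : ℂ) *
        coeff p.2 H := by
    intro J
    set S : ℂ⟦X⟧ := ∑ j ∈ range J, (C v * U) ^ j with hS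
    have h1 : S * (1 - C v * U) = 1 - (C v * U) ^ J := by
      have := geom_sum_mul (C v * U) J
      linear_combination -this
    have h2 : H * (1 - C e * φ) = 1 - (C e * φ) ^ (N + 1) := by
      have := geom_sum_mul (C e * φ) (N + 1)
      linear_combination -this
    have h3 : U * S = (C e * φ) ^ (N + 1) * (U * S) + C e * (H - C v ^ J * (U ^ J * H)) := by
      have h4 : (1 - C e * φ) * (U * S) = C e * (1 - (C v * U) ^ J) := by
        rw [← h1]
        linear_combination (-U * S) * hev + C e * S * hUφ
      rw [← mul_assoc (C v ^ J), ← mul_pow]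
      linear_combination H * h4 - (U * S) * h2
    have h5 : coeff N ((C e * φ) ^ (N + 1) * (U * S)) = 0 := by
      have hX : X ∣ C e * φ := by
        refine Dvd.dvd.mul_left ?_ _
        rw [X_dvd_iff, ← coeff_zero_eq_constantCoeff_apply, ← pow_one φ, hφ, coeff_cx_pow,
          pow_one, cf_phi_zero, Complex.ofReal_zero]
      have hX' : X ^ (N + 1) ∣ (C e * φ) ^ (N + 1) * (U * S) := (pow_dvd_pow_of_dvd hX _).mul_right _
      exact PowerSeries.X_pow_dvd_iff.1 hX' N (Nat.lt_succ_self N)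
    have h6 := congrArg (coeff N) h3
    rw [map_add, h5, zero_add, coeff_C_mul, map_sub, ← map_pow, coeff_C_mul, coeff_mul N (U ^ J) H] at h6
    simp only [hU, coeff_cx_pow] at h6
    rw [← pinZ_eq K hN h, ← hU] at h6
    rw [hS, mul_sum, map_sum] at h6
    have h7 : ∀ j, coeff N (U * (C v * U) ^ j) = v ^ j * (cf (ren K ^ (j + 1)) N : ℂ) := by
      intro j
      rw [mul_pow, mul_left_comm, ← map_pow, coeff_C_mul, ← pow_succ', hU, coeff_cx_pow]
    simp only [h7] at h6
    rw [h6, mul_sub, mul_sum]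
    simp only [mul_assoc]
  have hl : Tendsto (fun J => ∑ j ∈ range J, v ^ j * (cf (ren K ^ (j + 1)) N : ℂ)) atTop
      (𝓝 (e * pinZ K N h)) := by
    simp only [hkey]
    have : Tendsto (fun J => ∑ p ∈ antidiagonal N, v ^ J * (cf (ren K ^ J) p.1 : ℂ) *
        coeff p.2 H) atTop (𝓝 (∑ p ∈ antidiagonal N, 0 * coeff p.2 H)) :=
      tendsto_finsetSum _ fun p hp => (hlim p.1 (by
        have := HasAntidiagonal.mem_antidiagonal.1 hp; omega)).mul_const _
    simpa using (this.const_mul e).const_sub (e * pinZ K N h)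
  exact tendsto_nhds_unique hl hs.hasSum.tendsto_sum_nat

/-! ### The limit function -/

/-- The function `ζ ↦ ∑_j ζ^j / Γ((j+1)/2)`, an entire function of `ζ`. -/
noncomputable def limF (ζ : ℂ) : ℂ := ∑' j : ℕ, ζ ^ j * ((1 / Gamma (((j : ℝ) + 1) / 2) : ℝ) : ℂ)

/-- The coefficients `1 / Γ((j+1)/2)` are limits of the rescaled coefficients of
`(1 - X)^(-(j+1)/2)`, and so inherit their uniform geometric bound. -/
lemma gamma_bound {R : ℝ} (hR : 0 < R) :
    ∃ C, 0 < C ∧ ∀ j : ℕ, R ^ j * (1 / Gamma (((j : ℝ) + 1) / 2)) ≤ C * (1 / 2) ^ j := by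
  set U := stdSeries (1 / 2) with hU
  have hpos : ∀ n, 0 ≤ cf U n := fun n => (cf_std_pos (by norm_num) n).le
  have hUM : ∀ n : ℕ, cf U n * √(n + 1 : ℝ) ≤ 1 := fun n => by
    have h := (std_half_bounds n).2
    rwa [le_div_iff₀ (by positivity)] at h
  have hW : ∀ n, cf (U * U) n ≤ 1 := fun n => by
    rw [hU, ← stdSeries_add, show (1 / 2 + 1 / 2 : ℝ) = 1 by norm_num, cf_std_one]
  obtain ⟨C, hC, N₀, hN₀, h⟩ := term_bound hpos one_pos hUM hW hR
  refine ⟨C, hC, fun j => ?_⟩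
  refine le_of_tendsto ((pow_tendsto (U := U) IsEquivalent.refl j).const_mul (R ^ j)) ?_
  filter_upwards [eventually_ge_atTop N₀] with N hN
  refine le_trans (le_of_eq ?_) (h N hN j)
  rw [div_pow]
  ring

lemma gamma_term_pos (j : ℕ) : 0 < 1 / Gamma (((j : ℝ) + 1) / 2) :=
  one_div_pos.2 (Gamma_pos_of_pos (by positivity))

lemma limF_tendsto (S : Set ℂ) (ζ₀ : ℂ) : Tendsto limF (𝓝[S] ζ₀) (𝓝 (limF ζ₀)) := by
  obtain ⟨C, hC, h⟩ := gamma_bound (R := ‖ζ₀‖ + 1) (by positivity)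
  refine tendsto_tsum_of_dominated_convergence (bound := fun j => C * (1 / 2) ^ j)
    ((summable_geometric_of_lt_one (by norm_num) (by norm_num)).mul_left C) (fun j => ?_) ?_
  · exact ((tendsto_id.mono_left nhdsWithin_le_nhds).pow j).mul_const _
  · have : ∀ᶠ ζ in 𝓝[S] ζ₀, ‖ζ‖ < ‖ζ₀‖ + 1 :=
      ((continuous_norm.tendsto ζ₀).mono_left nhdsWithin_le_nhds).eventually_lt_const (by linarith)
    filter_upwards [this] with ζ hζ j
    rw [norm_mul, norm_pow, Complex.norm_real, norm_of_nonneg (gamma_term_pos j).le]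
    refine le_trans ?_ (h j)
    have := (gamma_term_pos j).le
    gcongr

lemma gaussian_moment (j : ℕ) :
    ∫ x in Set.Ioi (0 : ℝ), x ^ ((j : ℝ) + 1) * exp (-(1 / 4) * x ^ (2 : ℝ)) =
      2 * √π * j.factorial * (1 / Gamma (((j : ℝ) + 1) / 2)) := by
  rw [integral_rpow_mul_exp_neg_mul_rpow (by norm_num) (by linarith [j.cast_nonneg (α := ℝ)])
    (by norm_num)]
  have hG := Gamma_mul_Gamma_add_half (((j : ℝ) + 1) / 2)
  have hpos : 0 < Gamma (((j : ℝ) + 1) / 2) := Gamma_pos_of_pos (by positivity)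
  rw [show 2 * (((j : ℝ) + 1) / 2) = j + 1 by ring, Gamma_nat_eq_factorial] at hG
  rw [show ((j : ℝ) + 1 + 1) / 2 = ((j : ℝ) + 1) / 2 + 1 / 2 by ring,
    mul_one_div (2 * √π * j.factorial), eq_div_iff hpos.ne', mul_assoc,
    mul_comm (Gamma (((j : ℝ) + 1) / 2 + 1 / 2)), hG]
  have h4 : (1 / 4 : ℝ) ^ (-((j : ℝ) + 1 + 1) / 2) = 2 ^ ((j : ℝ) + 2) := by
    rw [show (1 / 4 : ℝ) = 2 ^ (-2 : ℝ) by rw [rpow_neg (by norm_num)]; norm_num,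
      ← rpow_mul (by norm_num)]
    congr 1; ring
  have h5 : (2 : ℝ) ^ ((j : ℝ) + 2) * 2 ^ (1 - ((j : ℝ) + 1)) = 4 := by
    rw [← rpow_add (by norm_num), show (j : ℝ) + 2 + (1 - (j + 1)) = 2 by ring]
    norm_num
  rw [h4]
  linear_combination (1 / 2 * j.factorial * √π) * h5

/-- Termwise integration of the exponential series, with the Gaussian moments evaluated by the
duplication formula for `Γ`. -/
lemma integral_eq_limF (ζ : ℂ) :
    ((1 / (2 * √π) : ℝ) : ℂ) *
      ∫ x in Set.Ioi (0 : ℝ), (x : ℂ) * Complex.exp (ζ * x - x ^ 2 / 4) = limF ζ := by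
  set g : ℕ → ℝ → ℝ := fun j x => x ^ ((j : ℝ) + 1) * exp (-(1 / 4) * x ^ (2 : ℝ)) with hg
  set F : ℕ → ℝ → ℂ := fun j x => (ζ ^ j / j.factorial) * (g j x : ℂ) with hF
  have hgint : ∀ j, IntegrableOn (g j) (Set.Ioi 0) := fun j => by
    have := integrableOn_rpow_mul_exp_neg_mul_sq (b := 1 / 4) (by norm_num) (s := (j : ℝ) + 1)
      (by linarith [j.cast_nonneg (α := ℝ)])
    simpa [hg] using this
  have hFint : ∀ j, IntegrableOn (F j) (Set.Ioi 0) := fun j => (hgint j).ofReal.const_mul _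
  have hnorm : ∀ j, ∫ x in Set.Ioi (0 : ℝ), ‖F j x‖ =
      2 * √π * (‖ζ‖ ^ j * (1 / Gamma (((j : ℝ) + 1) / 2))) := fun j => by
    have : ∫ x in Set.Ioi (0 : ℝ), ‖F j x‖ =
        ∫ x in Set.Ioi (0 : ℝ), (‖ζ‖ ^ j / j.factorial) * g j x := by
      refine setIntegral_congr_fun measurableSet_Ioi fun x hx => ?_
      have hx : (0 : ℝ) < x := hx
      have : 0 ≤ g j x := by simp only [hg]; positivity
      simp only [hF, norm_mul, norm_div, norm_pow, Complex.norm_natCast, Complex.norm_real,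
        norm_of_nonneg this]
    rw [this, integral_const_mul, gaussian_moment]
    field_simp
  have hsum : Summable fun j => ∫ x in Set.Ioi (0 : ℝ), ‖F j x‖ := by
    simp only [hnorm]
    refine Summable.mul_left _ ?_
    obtain ⟨C, hC, h⟩ := gamma_bound (R := ‖ζ‖ + 1) (by positivity)
    refine Summable.of_nonneg_of_le (fun j => ?_) (fun j => le_trans ?_ (h j))
      ((summable_geometric_of_lt_one (by norm_num) (by norm_num)).mul_left C)
    · have := (gamma_term_pos j).le
      positivity
    · have := (gamma_term_pos j).le
      gcongr
      linarith
  have hmain := hasSum_integral_of_summable_integral_norm hFint hsum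
  have hFtsum : ∫ x in Set.Ioi (0 : ℝ), ∑' j, F j x =
      ∫ x in Set.Ioi (0 : ℝ), (x : ℂ) * Complex.exp (ζ * x - x ^ 2 / 4) := by
    refine setIntegral_congr_fun measurableSet_Ioi fun x hx => ?_
    have hx : (0 : ℝ) < x := hx
    have h1 : HasSum (fun j : ℕ => (ζ * x) ^ j / (j.factorial : ℂ)) (Complex.exp (ζ * x)) := by
      rw [Complex.exp_eq_exp_ℂ]
      exact NormedSpace.expSeries_div_hasSum_exp (ζ * x)
    have h2 := h1.mul_left ((x : ℂ) * Complex.exp (-x ^ 2 / 4))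
    have h3 : ∀ j, F j x = (x : ℂ) * Complex.exp (-x ^ 2 / 4) * ((ζ * x) ^ j / (j.factorial : ℂ)) := by
      intro j
      have e1 : x ^ ((j : ℝ) + 1) = x ^ (j + 1) := by
        rw [← rpow_natCast]; push_cast; rfl
      have e2 : -(1 / 4) * x ^ (2 : ℝ) = -x ^ 2 / 4 := by
        rw [rpow_two]; ring
      simp only [hF, hg, e1, e2]
      push_cast
      ring
    rw [← funext h3] at h2
    rw [h2.tsum_eq, mul_assoc, ← Complex.exp_add]
    congr 2
    ring
  rw [hFtsum] at hmain
  have h6 := hmain.mul_left ((1 / (2 * √π) : ℝ) : ℂ)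
  rw [← h6.tsum_eq, limF]
  congr 1
  ext j
  rw [hF]
  simp only
  rw [integral_const_mul, integral_complex_ofReal, gaussian_moment]
  have hpi : (√π : ℂ) ≠ 0 := by exact_mod_cast (sqrt_pos.2 pi_pos).ne'
  have hj : (j.factorial : ℂ) ≠ 0 := by exact_mod_cast j.factorial_ne_zero
  push_cast
  field_simp

/-! ### Convergence of the partition function -/

/-- Joint convergence in `(N, ζ)`: in `√N Z_N = e^{-h} ∑_j (√N v)^j · N^{(1-j)/2} u^{*(j+1)}(N)` with
`h = ζ/√N` and `v = 1 - e^{-h}`, one has `√N v → ζ₀`, each rescaled coefficient tends to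
`1 / Γ((j+1)/2)`, and `term_bound` dominates the series. -/
lemma pinZ_tendsto {K : ℕ → ℝ} (hpos : ∀ n, 1 ≤ n → 0 ≤ K n)
    (hsum : HasSum (fun n : ℕ => K (n + 1)) 1)
    (htail : Tendsto (fun n : ℕ => (n : ℝ) ^ (3 / 2 : ℝ) * K n) atTop
      (𝓝 (1 / (2 * √π)))) (S : Set ℂ) (ζ₀ : ℂ) :
    Tendsto (fun p : ℕ × ℂ => ((√(p.1 : ℝ) : ℝ) : ℂ) * pinZ K p.1 (p.2 / ((√(p.1 : ℝ) : ℝ) : ℂ)))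
      (atTop ×ˢ 𝓝[S] ζ₀) (𝓝 (limF ζ₀)) := by
  set U := ren K with hUdef
  have hU : ∀ n, 0 ≤ cf U n := ren_nonneg hpos
  obtain ⟨M, hM, hUM⟩ := ren_bound hpos hsum htail
  obtain ⟨C₁, hC₁, hS⟩ := ren_sum_le hpos hsum htail
  have hW : ∀ n, cf (U * U) n ≤ 4 * C₁ * M := fun n =>
    sq_le_of_local_bound hU hM.le (hS n) fun k _ => hUM k
  -- near `ζ₀` one has `‖ζ‖ < ρ`, hence `‖v‖ ≤ 2 ‖h‖ ≤ 2 ρ / √N`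
  set ρ : ℝ := ‖ζ₀‖ + 1 with hρ
  have hρ0 : 0 < ρ := by positivity
  obtain ⟨C₂, hC₂, N₂, hN₂, hterm⟩ := term_bound hU hM hUM hW (R := 2 * ρ) (by positivity)
  obtain ⟨C₃, hC₃, N₃, hN₃, hpow⟩ := sum_pow_bound hU hM hUM (R := 2 * ρ) (by positivity)
  set s : ℕ × ℂ → ℝ := fun p => √(p.1 : ℝ) with hs
  set h : ℕ × ℂ → ℂ := fun p => p.2 / (s p : ℂ) with hh
  set v : ℕ × ℂ → ℂ := fun p => 1 - Complex.exp (-h p) with hv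
  have hfst : Tendsto (fun p : ℕ × ℂ => p.1) (atTop ×ˢ 𝓝[S] ζ₀) atTop := tendsto_fst
  have hsnd : Tendsto (fun p : ℕ × ℂ => p.2) (atTop ×ˢ 𝓝[S] ζ₀) (𝓝 ζ₀) :=
    (tendsto_snd (f := atTop) (g := 𝓝[S] ζ₀)).mono_right nhdsWithin_le_nhds
  have hsT : Tendsto s (atTop ×ˢ 𝓝[S] ζ₀) atTop :=
    tendsto_sqrt_atTop.comp ((tendsto_natCast_atTop_atTop (R := ℝ)).comp hfst)
  have hsinv : Tendsto (fun p => (s p)⁻¹) (atTop ×ˢ 𝓝[S] ζ₀) (𝓝 0) :=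
    tendsto_inv_atTop_zero.comp hsT
  have hgood : ∀ᶠ p in atTop ×ˢ 𝓝[S] ζ₀,
      N₂ ≤ p.1 ∧ N₃ ≤ p.1 ∧ 0 < s p ∧ ‖h p‖ ≤ 1 ∧ ‖h p‖ ≤ ρ / s p ∧ ‖v p‖ ≤ 2 * ρ / s p := by
    have hρe : ∀ᶠ p : ℕ × ℂ in atTop ×ˢ 𝓝[S] ζ₀, ‖p.2‖ < ρ := by
      exact hsnd.norm.eventually_lt_const (by rw [hρ]; linarith)
    filter_upwards [hfst.eventually_ge_atTop N₂, hfst.eventually_ge_atTop N₃,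
      hsT.eventually_ge_atTop ρ, hρe] with p h1 h2 h3 h4
    have hs0 : 0 < s p := hρ0.trans_le h3
    have hn : ‖h p‖ ≤ ρ / s p := by
      simp only [hh, norm_div, Complex.norm_real, norm_of_nonneg hs0.le]
      gcongr
    have hn1 : ‖h p‖ ≤ 1 := hn.trans ((div_le_one hs0).2 h3)
    refine ⟨h1, h2, hs0, hn1, hn, ?_⟩
    have := Complex.norm_exp_sub_one_le (x := -h p) (by rwa [norm_neg])
    rw [norm_neg] at this
    rw [hv]
    simp only
    rw [norm_sub_rev]
    refine this.trans ?_
    rw [mul_div_assoc]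
    linarith
  have hh0 : Tendsto h (atTop ×ˢ 𝓝[S] ζ₀) (𝓝 0) := by
    refine squeeze_zero_norm' (a := fun p => ρ * (s p)⁻¹) ?_ (by simpa using hsinv.const_mul ρ)
    filter_upwards [hgood] with p hp
    rw [← div_eq_mul_inv]
    exact hp.2.2.2.2.1
  have hexp : Tendsto (fun p => Complex.exp (-h p)) (atTop ×ˢ 𝓝[S] ζ₀) (𝓝 1) := by
    have := (Complex.continuous_exp.tendsto _).comp hh0.neg
    simpa [Function.comp_def] using this
  have hsv : Tendsto (fun p => (s p : ℂ) * v p) (atTop ×ˢ 𝓝[S] ζ₀) (𝓝 ζ₀) := by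
    have hdiff : Tendsto (fun p => (s p : ℂ) * v p - p.2) (atTop ×ˢ 𝓝[S] ζ₀) (𝓝 0) := by
      refine squeeze_zero_norm' (a := fun p => ρ ^ 2 * (s p)⁻¹) ?_
        (by simpa using hsinv.const_mul (ρ ^ 2))
      filter_upwards [hgood] with p hp
      obtain ⟨-, -, hs0, hn1, hn, -⟩ := hp
      have hsC : (s p : ℂ) ≠ 0 := by exact_mod_cast hs0.ne'
      have e1 : (s p : ℂ) * v p - p.2 = -((s p : ℂ) * (Complex.exp (-h p) - 1 - -h p)) := by
        have : p.2 = (s p : ℂ) * h p := by simp only [hh]; field_simp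
        rw [this]; simp only [hv]; ring
      have h2 := Complex.norm_exp_sub_one_sub_id_le (x := -h p) (by rwa [norm_neg])
      rw [norm_neg] at h2
      rw [e1, norm_neg, norm_mul, Complex.norm_real, norm_of_nonneg hs0.le]
      calc s p * ‖Complex.exp (-h p) - 1 - -h p‖ ≤ s p * (ρ / s p) ^ 2 := by
            gcongr
            exact h2.trans (by gcongr)
        _ = ρ ^ 2 * (s p)⁻¹ := by field_simp
    simpa using hdiff.add hsnd
  set f : ℕ × ℂ → ℕ → ℂ := fun p j =>
    ((s p : ℂ) * v p) ^ j * ((s p / s p ^ j * cf (U ^ (j + 1)) p.1 : ℝ) : ℂ) with hf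
  have hfv : ∀ p, 0 < s p → ∀ j, f p j = (s p : ℂ) * (v p ^ j * (cf (U ^ (j + 1)) p.1 : ℂ)) := by
    intro p hp j
    have hsC : (s p : ℂ) ≠ 0 := by exact_mod_cast hp.ne'
    simp only [hf]
    push_cast
    rw [mul_pow]
    field_simp
  have hfb : ∀ᶠ p in atTop ×ˢ 𝓝[S] ζ₀, ∀ j, ‖f p j‖ ≤ C₂ * (1 / 2) ^ j := by
    filter_upwards [hgood] with p hp j
    obtain ⟨h2, -, hs0, -, -, hv2⟩ := hp
    rw [hfv p hs0, norm_mul, norm_mul, norm_pow, Complex.norm_real, Complex.norm_real,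
      norm_of_nonneg hs0.le, norm_of_nonneg (pow_nonneg_cf hU _ _), ← mul_assoc]
    refine le_trans ?_ (hterm p.1 h2 j)
    have := pow_nonneg_cf hU (j + 1) p.1
    gcongr
  have hlim : Tendsto (fun p => ∑' j, f p j) (atTop ×ˢ 𝓝[S] ζ₀) (𝓝 (limF ζ₀)) := by
    refine tendsto_tsum_of_dominated_convergence (bound := fun j => C₂ * (1 / 2) ^ j)
      ((summable_geometric_of_lt_one (by norm_num) (by norm_num)).mul_left C₂) (fun j => ?_) hfb
    refine (hsv.pow j).mul ?_
    exact (Complex.continuous_ofReal.tendsto _).comp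
      ((pow_tendsto (ren_isEquivalent hpos hsum htail) j).comp hfst)
  have hfin := hexp.mul hlim
  rw [one_mul] at hfin
  refine hfin.congr' ?_
  filter_upwards [hgood, hfb] with p hp hb
  obtain ⟨-, h3, hs0, -, -, hv2⟩ := hp
  have hsC : (s p : ℂ) ≠ 0 := by exact_mod_cast hs0.ne'
  have hev : Complex.exp (h p) * (1 - v p) = 1 := by
    simp only [hv, sub_sub_cancel, ← Complex.exp_add, add_neg_cancel, Complex.exp_zero]
  have hgeo : Summable fun j : ℕ => C₂ * (1 / 2 : ℝ) ^ j :=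
    (summable_geometric_of_lt_one (by norm_num) (by norm_num)).mul_left C₂
  have hsumm : Summable fun j => v p ^ j * (cf (U ^ (j + 1)) p.1 : ℂ) := by
    have := Summable.of_norm_bounded hgeo hb
    rw [funext (hfv p hs0)] at this
    exact (summable_mul_left_iff hsC).1 this
  have hsmall : ∀ k ≤ p.1, Tendsto (fun j => v p ^ j * (cf (U ^ j) k : ℂ)) atTop (𝓝 0) := by
    intro k hk
    refine squeeze_zero_norm (a := fun j => C₃ * (1 / 2 : ℝ) ^ j) (fun j => ?_) ?_
    · rw [norm_mul, norm_pow, Complex.norm_real, norm_of_nonneg (pow_nonneg_cf hU _ _)]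
      refine le_trans ?_ (hpow p.1 h3 j)
      have h4 : cf (U ^ j) k ≤ ∑ k ∈ range (p.1 + 1), cf (U ^ j) k :=
        single_le_sum (f := fun k => cf (U ^ j) k) (fun i _ => pow_nonneg_cf hU j i)
          (mem_range.2 (by omega))
      have := pow_nonneg_cf hU j k
      gcongr
    · simpa using (tendsto_pow_atTop_nhds_zero_of_lt_one (r := (1 / 2 : ℝ)) (by norm_num)
        (by norm_num)).const_mul C₃
  have hZ := pinZ_eq_tsum K (by omega : 1 ≤ p.1) hev hsmall hsumm
  simp only [hfv p hs0]
  rw [tsum_mul_left, ← hZ, mul_left_comm, ← mul_assoc (Complex.exp (-h p)), ← Complex.exp_add,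
    neg_add_cancel, Complex.exp_zero, one_mul]

end Pinning

theorem stmt12 (K : ℕ → ℝ) (hpos : ∀ n, 1 ≤ n → 0 ≤ K n) (h1 : 0 < K 1)
    (hsum : HasSum (fun n : ℕ => K (n + 1)) 1)
    (htail : Tendsto (fun n : ℕ => (n : ℝ) ^ (3 / 2 : ℝ) * K n) atTop
      (nhds (1 / (2 * Real.sqrt π)))) :
    ∀ S : Set ℂ, IsCompact S →
      TendstoUniformlyOn
        (fun (N : ℕ) (ζ : ℂ) =>
          ((Real.sqrt N : ℝ) : ℂ) * pinZ K N (ζ / ((Real.sqrt N : ℝ) : ℂ)))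
        (fun ζ : ℂ => ((1 / (2 * Real.sqrt π) : ℝ) : ℂ) *
          ∫ x in Set.Ioi (0 : ℝ), (x : ℂ) * Complex.exp (ζ * x - x ^ 2 / 4))
        atTop S := by
  intro S hS
  simp only [Pinning.integral_eq_limF]
  rw [← tendstoLocallyUniformlyOn_iff_tendstoUniformlyOn_of_compact hS,
    tendstoLocallyUniformlyOn_iff_forall_tendsto]
  intro ζ₀ _
  -- both components converge to `limF ζ₀`, so that the pair converges to a diagonal point
  have hF := (Pinning.limF_tendsto S ζ₀).comp
    (tendsto_snd (f := (atTop : Filter ℕ)) (g := nhdsWithin ζ₀ S))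
  have hpair := hF.prodMk_nhds (Pinning.pinZ_tendsto hpos hsum htail S ζ₀)
  exact hpair.mono_right (nhds_le_uniformity _)
end
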